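/- Sup-norm entropy of sparse absolutely convex combinations of smooth bivariate components: fix an integer m ≥ 2, a constant b ≥ 1, integers n, p ≥ 1, and let 𝒢_b be the set of m-times continuously differentiable functions g : [0,1]² → ℝ with Ω̃(g) ≤ 1 and ‖g‖_∞ ≤ b. For J ⊆ 𝒥 = {(j,k) : 1 ≤ j ≤ k ≤ p}, let S_J be the set of functions on [0,1]^p of the form Σ_{(j,k)∈J} λ_{j,k} g_{j,k}(x_j, x_k) with Σ_{(j,k)∈J} |λ_{j,k}| ≤ 1 and g_{j,k} ∈ 𝒢_b (for j = k the component g_{j,j} is an m-times continuously differentiable univariate function of x_j with ‖g^{(m)}‖_{L²} ≤ 1 and ‖g‖_∞ ≤ b). Then there is a constant C depending only on m and b such that H(δ, S_J, ‖·‖_∞) ≤ C |J| δ^{−2/m} for all δ ∈ (0,1). -/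

import Mathlib

open scoped ENNReal NNReal

noncomputable section

namespace Census

/-- Mixed partial derivative `∂^{a+b} g / ∂u^a ∂v^b`. -/
def pd (a b : ℕ) (g : ℝ → ℝ → ℝ) (u v : ℝ) : ℝ :=
  iteratedDeriv a (fun t => iteratedDeriv b (g t) v) u

/-- `m`-th order smoothness penalty of a univariate function on `[0,1]`. -/
def Omega1M (m : ℕ) (h : ℝ → ℝ) : ℝ := ∫ u in (0:ℝ)..1, (iteratedDeriv m h u) ^ 2

/-- `m`-th order smoothness penalty of a bivariate function on `[0,1]²`:
`Ω(g) = Σ_{a+b=m} ‖∂^m g/∂u^a ∂v^b‖²_{L²([0,1]²)}`. -/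
def Omega2M (m : ℕ) (g : ℝ → ℝ → ℝ) : ℝ :=
  ∑ a ∈ Finset.range (m + 1),
    ∫ q in (Set.Icc (0:ℝ) 1) ×ˢ (Set.Icc (0:ℝ) 1), (pd a (m - a) g q.1 q.2) ^ 2

/-- The `u`-entropy of a set `A` with respect to an extended distance `d`. -/
def entE {α : Type*} (d : α → α → ℝ≥0∞) (A : Set α) (u : ℝ) : ℝ≥0∞ :=
  ⨅ T : {T : Finset α // ∀ a ∈ A, ∃ t ∈ T, d a t ≤ ENNReal.ofReal u},
    ENNReal.ofReal (Real.log (T.1.card : ℝ))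

/-- Sup-norm (extended) distance over the box `[0,1]^p`. -/
def dBox (p : ℕ) (f g : (Fin p → ℝ) → ℝ) : ℝ≥0∞ :=
  ⨆ x ∈ {x : Fin p → ℝ | ∀ j, x j ∈ Set.Icc (0:ℝ) 1}, ENNReal.ofReal |f x - g x|

/-- The class `S_J` of sparse absolutely convex combinations of `m`-smooth components
with `Ω̃ ≤ 1` and sup-norm bound `b`, supported on the index set `J`. -/
def SJ (m : ℕ) (b : ℝ) (p : ℕ) (J : Finset (Fin p × Fin p)) :
    Set ((Fin p → ℝ) → ℝ) :=
  {f | ∃ (lam : Fin p × Fin p → ℝ) (gd : Fin p → ℝ → ℝ)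
        (go : Fin p → Fin p → ℝ → ℝ → ℝ),
      (∑ q ∈ J, |lam q|) ≤ 1 ∧
      (∀ j, ContDiff ℝ (m : ℕ∞) (gd j) ∧
        Real.sqrt (Omega1M m (gd j)) ≤ 1 ∧
        ∀ u ∈ Set.Icc (0:ℝ) 1, |gd j u| ≤ b) ∧
      (∀ j k, ContDiff ℝ (m : ℕ∞) (fun q : ℝ × ℝ => go j k q.1 q.2) ∧
        Real.sqrt (Omega2M m (go j k)) ≤ 1 ∧
        ∀ u ∈ Set.Icc (0:ℝ) 1, ∀ v ∈ Set.Icc (0:ℝ) 1, |go j k u v| ≤ b) ∧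
      f = fun x => ∑ q ∈ J, lam q *
        (if q.1 = q.2 then gd q.1 (x q.1) else go q.1 q.2 (x q.1) (x q.2))}

end Census

namespace Census12
open Census MeasureTheory

/-- joint `C^n` smoothness of a curried bivariate function -/
def CD (n : ℕ) (f : ℝ → ℝ → ℝ) : Prop := ContDiff ℝ n (fun q : ℝ × ℝ => f q.1 q.2)

def D1 (f : ℝ → ℝ → ℝ) (u v : ℝ) : ℝ := deriv (fun t => f t v) u
def D2 (f : ℝ → ℝ → ℝ) (u v : ℝ) : ℝ := deriv (f u) v

lemma CD.mono {n k : ℕ} {f : ℝ → ℝ → ℝ} (h : CD n f) (hk : k ≤ n) : CD k f :=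
  ContDiff.of_le h (by exact_mod_cast hk)

lemma CD.cont {n : ℕ} {f : ℝ → ℝ → ℝ} (h : CD n f) :
    Continuous (fun q : ℝ × ℝ => f q.1 q.2) := ContDiff.continuous h

lemma CD.hasD1 {f : ℝ → ℝ → ℝ} (h : CD 1 f) (u v : ℝ) :
    HasDerivAt (fun t => f t v) (fderiv ℝ (fun q : ℝ × ℝ => f q.1 q.2) (u, v) (1, 0)) u := by
  have hd : HasFDerivAt (fun q : ℝ × ℝ => f q.1 q.2)
      (fderiv ℝ (fun q : ℝ × ℝ => f q.1 q.2) (u, v)) (u, v) :=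
    ((ContDiff.differentiable h (by norm_num)) (u, v)).hasFDerivAt
  have h2 : HasDerivAt (fun t : ℝ => (t, v)) ((1 : ℝ), (0 : ℝ)) u :=
    (hasDerivAt_id u).prodMk (hasDerivAt_const u v)
  exact hd.comp_hasDerivAt u h2

lemma CD.hasD2 {f : ℝ → ℝ → ℝ} (h : CD 1 f) (u v : ℝ) :
    HasDerivAt (f u) (fderiv ℝ (fun q : ℝ × ℝ => f q.1 q.2) (u, v) (0, 1)) v := by
  have hd : HasFDerivAt (fun q : ℝ × ℝ => f q.1 q.2)
      (fderiv ℝ (fun q : ℝ × ℝ => f q.1 q.2) (u, v)) (u, v) :=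
    ((ContDiff.differentiable h (by norm_num)) (u, v)).hasFDerivAt
  have h2 : HasDerivAt (fun t : ℝ => (u, t)) ((0 : ℝ), (1 : ℝ)) v :=
    (hasDerivAt_const v u).prodMk (hasDerivAt_id v)
  exact hd.comp_hasDerivAt v h2

lemma CD.D1_eq {f : ℝ → ℝ → ℝ} (h : CD 1 f) :
    D1 f = fun u v => fderiv ℝ (fun q : ℝ × ℝ => f q.1 q.2) (u, v) (1, 0) := by
  funext u v; exact (h.hasD1 u v).deriv

lemma CD.D2_eq {f : ℝ → ℝ → ℝ} (h : CD 1 f) :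
    D2 f = fun u v => fderiv ℝ (fun q : ℝ × ℝ => f q.1 q.2) (u, v) (0, 1) := by
  funext u v; exact (h.hasD2 u v).deriv

lemma CD.D1' {n : ℕ} {f : ℝ → ℝ → ℝ} (h : CD (n + 1) f) : CD n (D1 f) := by
  rw [(h.mono (by omega : 1 ≤ n + 1)).D1_eq]
  have := ContDiff.fderiv_right (m := n) h (by norm_cast)
  exact this.clm_apply contDiff_const

lemma CD.D2' {n : ℕ} {f : ℝ → ℝ → ℝ} (h : CD (n + 1) f) : CD n (D2 f) := by
  rw [(h.mono (by omega : 1 ≤ n + 1)).D2_eq]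
  have := ContDiff.fderiv_right (m := n) h (by norm_cast)
  exact this.clm_apply contDiff_const

lemma CD.comm {f : ℝ → ℝ → ℝ} (h : CD 2 f) : D2 (D1 f) = D1 (D2 f) := by
  have h1 : CD 1 f := h.mono (by norm_num)
  have hF : ContDiff ℝ 1 (fderiv ℝ (fun q : ℝ × ℝ => f q.1 q.2)) :=
    ContDiff.fderiv_right (n := 2) h (by norm_num)
  have hdd := hF.differentiable (by norm_num)
  rw [(CD.D1' (n := 1) h).D2_eq, (CD.D2' (n := 1) h).D1_eq, h1.D1_eq, h1.D2_eq]
  funext u v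
  have hs : IsSymmSndFDerivAt ℝ (fun q : ℝ × ℝ => f q.1 q.2) (u, v) :=
    (ContDiff.contDiffAt h).isSymmSndFDerivAt (by simp)
  have e : ∀ w z : ℝ × ℝ, fderiv ℝ (fun q : ℝ × ℝ =>
      fderiv ℝ (fun q : ℝ × ℝ => f q.1 q.2) (q.1, q.2) w) (u, v) z =
      fderiv ℝ (fderiv ℝ (fun q : ℝ × ℝ => f q.1 q.2)) (u, v) z w := by
    intro w z
    have := ((hdd (u, v)).hasFDerivAt).clm_apply (hasFDerivAt_const w (u, v))
    have := this.fderiv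
    simp only [Prod.mk.eta] at this ⊢
    rw [this]; simp
  rw [e, e]
  exact hs _ _

lemma pd_eq (a b : ℕ) (g : ℝ → ℝ → ℝ) : pd a b g = D1^[a] (D2^[b] g) := by
  have h2 : ∀ b : ℕ, D2^[b] g = fun u v => iteratedDeriv b (g u) v := by
    intro b
    induction b with
    | zero => funext u v; simp
    | succ b ih =>
      rw [Function.iterate_succ_apply', ih]
      funext u v
      rw [iteratedDeriv_succ]; rfl
  have h1 : ∀ (f : ℝ → ℝ → ℝ) (a : ℕ), D1^[a] f = fun u v => iteratedDeriv a (fun t => f t v) u := by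
    intro f a
    induction a with
    | zero => funext u v; simp
    | succ b ih =>
      rw [Function.iterate_succ_apply', ih]
      funext u v
      rw [iteratedDeriv_succ]; rfl
  rw [h1, h2]; rfl

lemma pd_zero (g : ℝ → ℝ → ℝ) : pd 0 0 g = g := by simp [pd_eq]

lemma pd_succ_left (a b : ℕ) (g : ℝ → ℝ → ℝ) : pd (a + 1) b g = D1 (pd a b g) := by
  rw [pd_eq, pd_eq, Function.iterate_succ_apply']

lemma pd_zero_succ (b : ℕ) (g : ℝ → ℝ → ℝ) : pd 0 (b + 1) g = D2 (pd 0 b g) := by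
  rw [pd_eq, pd_eq, Function.iterate_zero, id, id, Function.iterate_succ_apply']

lemma CD.pd {a b k : ℕ} {g : ℝ → ℝ → ℝ} (h : CD (a + b + k) g) : CD k (pd a b g) := by
  induction a generalizing k with
  | zero =>
    induction b generalizing k with
    | zero => rw [pd_zero]; exact h.mono (by omega)
    | succ b ih => rw [pd_zero_succ]; exact (ih (k := k + 1) (h.mono (by omega))).D2'
  | succ a ih => rw [pd_succ_left]; exact (ih (k := k + 1) (h.mono (by omega))).D1'

lemma D2_pd {a b : ℕ} {g : ℝ → ℝ → ℝ} (h : CD (a + b + 1) g) :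
    D2 (Census.pd a b g) = Census.pd a (b + 1) g := by
  induction a with
  | zero => rw [pd_zero_succ]
  | succ a ih =>
    rw [pd_succ_left, pd_succ_left, ← ih (h.mono (by omega)), CD.comm]
    exact CD.pd (h.mono (by omega))

lemma CD.add {n : ℕ} {f g : ℝ → ℝ → ℝ} (hf : CD n f) (hg : CD n g) : CD n (f + g) :=
  ContDiff.add hf hg
lemma CD.sub {n : ℕ} {f g : ℝ → ℝ → ℝ} (hf : CD n f) (hg : CD n g) : CD n (f - g) :=
  ContDiff.sub hf hg
lemma CD.smul {n : ℕ} {f : ℝ → ℝ → ℝ} (c : ℝ) (hf : CD n f) : CD n (c • f) :=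
  ContDiff.const_smul c hf
lemma CD.sum {n : ℕ} {ι : Type*} (s : Finset ι) {f : ι → ℝ → ℝ → ℝ} (hf : ∀ i, CD n (f i)) :
    CD n (∑ i ∈ s, f i) := by
  have := ContDiff.sum (s := s) (n := n) (𝕜 := ℝ) (fun i _ => hf i)
  unfold CD
  simpa [Finset.sum_apply] using this

lemma pd_sub {a b : ℕ} {f g : ℝ → ℝ → ℝ} (hf : CD (a + b) f) (hg : CD (a + b) g) :
    pd a b (f - g) = pd a b f - pd a b g := by
  induction a with
  | zero =>
    induction b with
    | zero => simp [pd_zero]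
    | succ b ih =>
      rw [pd_zero_succ, ih (hf.mono (by omega)) (hg.mono (by omega)), pd_zero_succ, pd_zero_succ]
      have h1 : CD 1 (pd 0 b f) := CD.pd (hf.mono (by omega))
      have h2 : CD 1 (pd 0 b g) := CD.pd (hg.mono (by omega))
      funext u v
      exact ((h1.hasD2 u v).differentiableAt.hasDerivAt.sub
        (h2.hasD2 u v).differentiableAt.hasDerivAt).deriv
  | succ a ih =>
      rw [pd_succ_left, ih (hf.mono (by omega)) (hg.mono (by omega)), pd_succ_left, pd_succ_left]
      have h1 : CD 1 (pd a b f) := CD.pd (hf.mono (by omega))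
      have h2 : CD 1 (pd a b g) := CD.pd (hg.mono (by omega))
      funext u v
      exact ((h1.hasD1 u v).differentiableAt.hasDerivAt.sub
        (h2.hasD1 u v).differentiableAt.hasDerivAt).deriv

lemma pd_add {a b : ℕ} {f g : ℝ → ℝ → ℝ} (hf : CD (a + b) f) (hg : CD (a + b) g) :
    pd a b (f + g) = pd a b f + pd a b g := by
  have := pd_sub (hf.add hg) hg
  rw [add_sub_cancel_right] at this
  rw [this]; simp

lemma pd_smul {a b : ℕ} (c : ℝ) (f : ℝ → ℝ → ℝ) :
    pd a b (c • f) = c • pd a b f := by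
  funext u v
  simp only [Census.pd, Pi.smul_apply]
  have : ∀ t, iteratedDeriv b (c • f t) v = c • iteratedDeriv b (f t) v := by
    intro t; rw [iteratedDeriv_const_smul_field]
  simp only [this]
  exact iteratedDeriv_const_smul_field c (fun t => iteratedDeriv b (f t) v)

lemma pd_sum {a b : ℕ} {ι : Type*} (s : Finset ι) {f : ι → ℝ → ℝ → ℝ}
    (hf : ∀ i, CD (a + b) (f i)) :
    pd a b (∑ i ∈ s, f i) = ∑ i ∈ s, pd a b (f i) := by
  classical
  induction s using Finset.induction_on with
  | empty =>
    have := pd_smul (a := a) (b := b) 0 (0 : ℝ → ℝ → ℝ)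
    simpa using this
  | insert i s hi ih =>
    rw [Finset.sum_insert hi, Finset.sum_insert hi, pd_add (hf i) (CD.sum s hf), ih]

/-- normalised monomials -/
def mono (i j : ℕ) (u v : ℝ) : ℝ := u ^ i * v ^ j / (i.factorial * j.factorial)

lemma CD_mono (n i j : ℕ) : CD n (mono i j) := by
  unfold CD mono; fun_prop

lemma pd_mono (a b i j : ℕ) (u v : ℝ) : pd a b (mono i j) u v =
    (iteratedDeriv a (fun t => t ^ i) u / i.factorial) *
      (iteratedDeriv b (fun t => t ^ j) v / j.factorial) := by
  unfold Census.pd mono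
  have h1 : ∀ t : ℝ, iteratedDeriv b (fun v => t ^ i * v ^ j / (i.factorial * j.factorial)) v =
     (iteratedDeriv b (fun t => t ^ j) v / (i.factorial * j.factorial)) * t ^ i := by
    intro t
    have : (fun v : ℝ => t ^ i * v ^ j / (i.factorial * j.factorial)) =
      fun v => (t ^ i / (i.factorial * j.factorial)) * v ^ j := by
      funext v; ring
    rw [this, iteratedDeriv_const_mul_field]; ring
  simp only [h1]
  rw [iteratedDeriv_const_mul_field]
  field_simp

lemma iter_pow_zero {a i : ℕ} (h : i < a) (u : ℝ) : iteratedDeriv a (fun t : ℝ => t ^ i) u = 0 := by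
  rw [iteratedDeriv_pow]; simp [Nat.descFactorial_eq_zero_iff_lt.2 h]
lemma iter_pow_self (a : ℕ) (u : ℝ) :
    iteratedDeriv a (fun t : ℝ => t ^ a) u = a.factorial := by
  rw [iteratedDeriv_pow]; simp [Nat.descFactorial_self]

lemma pd_mono_zero {a b i j : ℕ} (h : i < a ∨ j < b) : pd a b (mono i j) = 0 := by
  funext u v
  rw [pd_mono]
  rcases h with h | h <;> simp [iter_pow_zero h]
lemma pd_mono_self (a b : ℕ) : pd a b (mono a b) = 1 := by
  funext u v
  rw [pd_mono, iter_pow_self, iter_pow_self, div_self, div_self] <;> simp [Nat.factorial_ne_zero]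

end Census12

namespace Census12
open Census MeasureTheory

def mu : Measure ℝ := volume.restrict (Set.Icc (0:ℝ) 1)
def M2 : Measure (ℝ × ℝ) := mu.prod mu

instance : IsProbabilityMeasure mu := ⟨by simp [mu]⟩
instance : IsProbabilityMeasure M2 := by unfold M2; infer_instance

lemma M2_eq : M2 = volume.restrict ((Set.Icc (0:ℝ) 1) ×ˢ (Set.Icc (0:ℝ) 1)) := by
  unfold M2 mu
  rw [Measure.prod_restrict, ← Measure.volume_eq_prod]

lemma ae_mu : ∀ᵐ x ∂mu, x ∈ Set.Icc (0:ℝ) 1 := ae_restrict_mem measurableSet_Icc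

lemma ae_M2 : ∀ᵐ q ∂M2, q.1 ∈ Set.Icc (0:ℝ) 1 ∧ q.2 ∈ Set.Icc (0:ℝ) 1 := by
  rw [M2_eq]
  exact ae_restrict_mem (measurableSet_Icc.prod measurableSet_Icc)

lemma int_mu {f : ℝ → ℝ} (hf : Continuous f) : Integrable f mu :=
  hf.continuousOn.integrableOn_compact isCompact_Icc

lemma int_M2 {f : ℝ × ℝ → ℝ} (hf : Continuous f) : Integrable f M2 := by
  rw [M2_eq]
  exact hf.continuousOn.integrableOn_compact (isCompact_Icc.prod isCompact_Icc)

def N1 (f : ℝ → ℝ → ℝ) : ℝ := ∫ q, |f q.1 q.2| ∂M2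

lemma N1_nonneg (f : ℝ → ℝ → ℝ) : 0 ≤ N1 f := integral_nonneg fun _ => abs_nonneg _

lemma ftc {h h' : ℝ → ℝ} (hd : ∀ x, HasDerivAt h (h' x) x) (hc : Continuous h') {x y : ℝ}
    (hx : x ∈ Set.Icc (0:ℝ) 1) (hy : y ∈ Set.Icc (0:ℝ) 1) : |h x - h y| ≤ ∫ s, |h' s| ∂mu := by
  have e := intervalIntegral.integral_eq_sub_of_hasDerivAt (a := y) (b := x) (fun t _ => hd t)
    (hc.intervalIntegrable _ _)
  rw [← e]
  refine (intervalIntegral.norm_integral_le_integral_norm_uIoc (f := h')).trans ?_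
  refine setIntegral_mono_set (int_mu hc.abs) (Filter.Eventually.of_forall fun _ => abs_nonneg _) ?_
  refine Filter.Eventually.of_forall ?_
  intro z hz
  rcases Set.mem_uIoc.1 hz with hz | hz
  · exact ⟨hy.1.trans hz.1.le, hz.2.trans hx.2⟩
  · exact ⟨hx.1.trans hz.1.le, hz.2.trans hy.2⟩

lemma CD.cont1 {n : ℕ} {f : ℝ → ℝ → ℝ} (h : CD n f) (v : ℝ) : Continuous (fun u => f u v) :=
  h.cont.comp (by fun_prop : Continuous fun u : ℝ => (u, v))
lemma CD.cont2 {n : ℕ} {f : ℝ → ℝ → ℝ} (h : CD n f) (u : ℝ) : Continuous (fun v => f u v) :=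
  h.cont.comp (by fun_prop : Continuous fun v : ℝ => (u, v))

lemma ftc1 {f : ℝ → ℝ → ℝ} (h : CD 1 f) (v : ℝ) {x y : ℝ}
    (hx : x ∈ Set.Icc (0:ℝ) 1) (hy : y ∈ Set.Icc (0:ℝ) 1) :
    |f x v - f y v| ≤ ∫ s, |D1 f s v| ∂mu :=
  ftc (h := fun u => f u v) (fun s => (h.hasD1 s v).differentiableAt.hasDerivAt)
    ((CD.D1' (n := 0) h).cont1 v) hx hy

lemma ftc2 {f : ℝ → ℝ → ℝ} (h : CD 1 f) (u : ℝ) {x y : ℝ}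
    (hx : x ∈ Set.Icc (0:ℝ) 1) (hy : y ∈ Set.Icc (0:ℝ) 1) :
    |f u x - f u y| ≤ ∫ s, |D2 f u s| ∂mu :=
  ftc (h := fun v => f u v) (fun s => (h.hasD2 u s).differentiableAt.hasDerivAt)
    ((CD.D2' (n := 0) h).cont2 u) hx hy

/-- inner marginals -/
lemma N1_eq_fst {f : ℝ → ℝ → ℝ} (h : CD 0 f) :
    Integrable (fun u => ∫ v, |f u v| ∂mu) mu ∧ N1 f = ∫ u, ∫ v, |f u v| ∂mu ∂mu := by
  have hi : Integrable (fun q : ℝ × ℝ => |f q.1 q.2|) (mu.prod mu) := int_M2 h.cont.abs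
  exact ⟨hi.integral_prod_left, integral_prod _ hi⟩

lemma N1_eq_snd {f : ℝ → ℝ → ℝ} (h : CD 0 f) :
    Integrable (fun v => ∫ u, |f u v| ∂mu) mu ∧ N1 f = ∫ v, ∫ u, |f u v| ∂mu ∂mu := by
  have hi : Integrable (fun q : ℝ × ℝ => |f q.1 q.2|) (mu.prod mu) := int_M2 h.cont.abs
  exact ⟨hi.integral_prod_right, integral_prod_symm _ hi⟩

lemma int_fst {h : ℝ → ℝ} (hh : Integrable h mu) :
    Integrable (fun q : ℝ × ℝ => h q.1) M2 ∧ ∫ q, h q.1 ∂M2 = ∫ u, h u ∂mu := by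
  refine ⟨hh.comp_fst mu, ?_⟩
  unfold M2; rw [integral_fun_fst]; simp
lemma int_snd {h : ℝ → ℝ} (hh : Integrable h mu) :
    Integrable (fun q : ℝ × ℝ => h q.2) M2 ∧ ∫ q, h q.2 ∂M2 = ∫ u, h u ∂mu := by
  refine ⟨hh.comp_snd mu, ?_⟩
  unfold M2; rw [integral_fun_snd]; simp

def avg (f : ℝ → ℝ → ℝ) : ℝ := ∫ q, f q.1 q.2 ∂M2

lemma poincare {f : ℝ → ℝ → ℝ} (h : CD 1 f) :
    N1 (fun u v => f u v - avg f) ≤ N1 (D1 f) + N1 (D2 f) := by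
  obtain ⟨i1, e1⟩ := N1_eq_snd (CD.D1' (n := 0) h)
  obtain ⟨i2, e2⟩ := N1_eq_fst (CD.D2' (n := 0) h)
  have key : ∀ x : ℝ × ℝ, (x.1 ∈ Set.Icc (0:ℝ) 1 ∧ x.2 ∈ Set.Icc (0:ℝ) 1) →
      |f x.1 x.2 - avg f| ≤ (∫ u, |D1 f u x.2| ∂mu) + N1 (D2 f) := by
    intro x hx
    have hsub : f x.1 x.2 - avg f = ∫ y, (f x.1 x.2 - f y.1 y.2) ∂M2 := by
      rw [integral_sub (integrable_const _) (int_M2 h.cont)]; simp [avg]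
    rw [hsub]
    refine (abs_integral_le_integral_abs).trans ?_
    have : (∫ u, |D1 f u x.2| ∂mu) + N1 (D2 f) =
        ∫ y : ℝ × ℝ, ((∫ u, |D1 f u x.2| ∂mu) + (∫ v, |D2 f y.1 v| ∂mu)) ∂M2 := by
      rw [integral_add (integrable_const _) (int_fst i2).1, (int_fst i2).2, e2]; simp
    rw [this]
    refine integral_mono_ae (int_M2 (continuous_const.sub h.cont).abs)
      ((integrable_const _).add (int_fst i2).1) ?_
    filter_upwards [ae_M2] with y hy
    have a1 := ftc1 h x.2 hx.1 hy.1
    have a2 := ftc2 h y.1 hx.2 hy.2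
    calc |f x.1 x.2 - f y.1 y.2| = |(f x.1 x.2 - f y.1 x.2) + (f y.1 x.2 - f y.1 y.2)| := by
          congr 1; ring
      _ ≤ _ := (abs_add_le _ _).trans (add_le_add a1 a2)
  have : N1 (D1 f) + N1 (D2 f) =
      ∫ x : ℝ × ℝ, ((∫ u, |D1 f u x.2| ∂mu) + N1 (D2 f)) ∂M2 := by
    rw [integral_add (int_snd i1).1 (integrable_const _), (int_snd i1).2, e1]; simp
  rw [this]
  refine integral_mono_ae (int_M2 (h.cont.sub continuous_const).abs)
    ((int_snd i1).1.add (integrable_const _)) ?_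
  filter_upwards [ae_M2] with x hx using key x hx

lemma sup_bound {f : ℝ → ℝ → ℝ} (h : CD 2 f) {u v : ℝ} (hu : u ∈ Set.Icc (0:ℝ) 1)
    (hv : v ∈ Set.Icc (0:ℝ) 1) :
    |f u v| ≤ N1 f + N1 (D1 f) + N1 (D2 f) + N1 (D2 (D1 f)) := by
  have h1 : CD 1 f := h.mono (by norm_num)
  have hD1 : CD 1 (D1 f) := CD.D1' h
  have hD2 : CD 1 (D2 f) := CD.D2' h
  obtain ⟨i1, e1⟩ := N1_eq_snd (hD1.mono (by norm_num : 0 ≤ 1))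
  obtain ⟨i2, e2⟩ := N1_eq_fst (hD2.mono (by norm_num : 0 ≤ 1))
  obtain ⟨i3, e3⟩ := N1_eq_fst (CD.D2' (n := 0) hD1)
  have hif : Integrable (fun q : ℝ × ℝ => |f q.1 q.2|) M2 := int_M2 h.cont.abs
  have : N1 f + N1 (D1 f) + N1 (D2 f) + N1 (D2 (D1 f)) =
      ∫ y : ℝ × ℝ, (((|f y.1 y.2| + ∫ s, |D1 f s y.2| ∂mu) + ∫ t, |D2 f y.1 t| ∂mu)
        + N1 (D2 (D1 f))) ∂M2 := by
    have k1 : Integrable (fun y : ℝ × ℝ => |f y.1 y.2| + ∫ s, |D1 f s y.2| ∂mu) M2 :=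
      hif.add (int_snd i1).1
    have k2 : Integrable (fun y : ℝ × ℝ => (|f y.1 y.2| + ∫ s, |D1 f s y.2| ∂mu) +
      ∫ t, |D2 f y.1 t| ∂mu) M2 := k1.add (int_fst i2).1
    rw [integral_add k2 (integrable_const _),
      integral_add k1 (int_fst i2).1, integral_add hif (int_snd i1).1,
      (int_snd i1).2, (int_fst i2).2, e1, e2]
    simp [N1]
  rw [this]
  have hc : |f u v| = ∫ _ : ℝ × ℝ, |f u v| ∂M2 := by simp
  rw [hc]
  refine integral_mono_ae (integrable_const _)
    (((hif.add (int_snd i1).1).add (int_fst i2).1).add (integrable_const _)) ?_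
  filter_upwards [ae_M2] with y hy
  have a1 := ftc1 h1 y.2 hu hy.1
  have a2 := ftc2 h1 y.1 hv hy.2
  have a3 : |(f u v - f u y.2) - (f y.1 v - f y.1 y.2)| ≤ N1 (D2 (D1 f)) := by
    have b1 := ftc (h := fun s => f s v - f s y.2) (h' := fun s => D1 f s v - D1 f s y.2)
      (fun s => (h1.hasD1 s v).differentiableAt.hasDerivAt.sub
        (h1.hasD1 s y.2).differentiableAt.hasDerivAt) ((hD1.cont1 v).sub (hD1.cont1 y.2)) hu hy.1
    refine b1.trans ?_
    rw [e3]
    exact integral_mono (int_mu ((hD1.cont1 v).sub (hD1.cont1 y.2)).abs) i3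
      (fun s => ftc2 hD1 s hv hy.2)
  have e : f u v = ((f y.1 y.2 + (f u y.2 - f y.1 y.2)) + (f y.1 v - f y.1 y.2)) +
    ((f u v - f u y.2) - (f y.1 v - f y.1 y.2)) := by ring
  rw [e]
  refine (abs_add_le _ _).trans (add_le_add ?_ a3)
  refine (abs_add_le _ _).trans (add_le_add ?_ a2)
  exact (abs_add_le _ _).trans (add_le_add le_rfl a1)

lemma N1_le_sqrt {f : ℝ → ℝ → ℝ} (h : CD 0 f) : N1 f ≤ Real.sqrt (∫ q, (f q.1 q.2) ^ 2 ∂M2) := by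
  apply Real.le_sqrt_of_sq_le
  have hif : Integrable (fun q : ℝ × ℝ => |f q.1 q.2|) M2 := int_M2 h.cont.abs
  have hif2 : Integrable (fun q : ℝ × ℝ => (f q.1 q.2) ^ 2) M2 := int_M2 (h.cont.pow 2)
  have : 0 ≤ ∫ q : ℝ × ℝ, ((f q.1 q.2) ^ 2 - (2 * N1 f) * |f q.1 q.2| + (N1 f) ^ 2) ∂M2 := by
    apply integral_nonneg
    intro q
    have := sq_nonneg (|f q.1 q.2| - N1 f)
    have e := sq_abs (f q.1 q.2)
    simp only [Pi.zero_apply]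
    nlinarith
  have k1 : Integrable (fun q : ℝ × ℝ => (f q.1 q.2) ^ 2 - (2 * N1 f) * |f q.1 q.2|) M2 :=
    hif2.sub (hif.const_mul _)
  rw [integral_add k1 (integrable_const _),
    integral_sub hif2 (hif.const_mul _), integral_const_mul] at this
  simp only [integral_const, probReal_univ, one_smul] at this
  change 0 ≤ _ - 2 * N1 f * N1 f + _ at this
  nlinarith

/-- polynomials as a span of products -/
def PS (m : ℕ) : Submodule ℝ (ℝ → ℝ → ℝ) :=
  Submodule.span ℝ {f | ∃ p q : Polynomial ℝ, p.degree < m ∧ q.degree < m ∧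
    f = fun u v => p.eval u * q.eval v}

lemma PS_mono {m n : ℕ} (h : m ≤ n) : PS m ≤ PS n := by
  apply Submodule.span_mono
  rintro f ⟨p, q, hp, hq, rfl⟩
  exact ⟨p, q, hp.trans_le (by exact_mod_cast h), hq.trans_le (by exact_mod_cast h), rfl⟩

lemma mono_mem {m i j : ℕ} (hi : i < m) (hj : j < m) : mono i j ∈ PS m := by
  have : mono i j = (1 / (i.factorial * j.factorial : ℝ)) •
      (fun u v => (Polynomial.X ^ i : Polynomial ℝ).eval u * (Polynomial.X ^ j : Polynomial ℝ).eval v) := by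
    funext u v; simp [mono]; ring
  rw [this]
  refine Submodule.smul_mem _ _ (Submodule.subset_span ⟨_, _, ?_, ?_, rfl⟩)
  · rw [Polynomial.degree_X_pow]; exact_mod_cast hi
  · rw [Polynomial.degree_X_pow]; exact_mod_cast hj

def S1 (m : ℕ) (G : ℝ → ℝ → ℝ) : ℝ := ∑ a ∈ Finset.range (m + 1), N1 (pd a (m - a) G)

lemma S1_nonneg (m : ℕ) (G : ℝ → ℝ → ℝ) : 0 ≤ S1 m G := Finset.sum_nonneg fun _ _ => N1_nonneg _
lemma le_S1 {m a b : ℕ} (h : a + b = m) (G : ℝ → ℝ → ℝ) : N1 (pd a b G) ≤ S1 m G := by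
  have : b = m - a := by omega
  subst this
  exact Finset.single_le_sum (f := fun a => N1 (pd a (m - a) G)) (fun _ _ => N1_nonneg _)
    (Finset.mem_range.2 (by omega))

lemma deg_approx (m : ℕ) : ∃ C : ℝ, 0 ≤ C ∧ ∀ G, CD m G → ∃ P ∈ PS m, (∀ k, CD k P) ∧
    (∀ a b, m ≤ a + b → pd a b P = 0) ∧
    ∀ a b, a + b ≤ m → N1 (pd a b (G - P)) ≤ C * S1 m G := by
  induction m with
  | zero =>
    refine ⟨1, zero_le_one, fun G hG => ⟨0, Submodule.zero_mem _, ?_, ?_, ?_⟩⟩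
    · intro k; exact contDiff_const
    · intro a b _
      have := pd_smul (a := a) (b := b) 0 (0 : ℝ → ℝ → ℝ)
      simpa using this
    · intro a b h
      have := le_S1 (m := 0) (a := a) (b := b) (by omega) G
      simpa using this
  | succ m ih =>
    obtain ⟨C, hC, H⟩ := ih
    refine ⟨C * (2 * (m + 1)) + 2, by positivity, fun G hG => ?_⟩
    set Pt : ℝ → ℝ → ℝ := ∑ i ∈ Finset.range (m + 1), avg (pd i (m - i) G) • mono i (m - i) with hPt
    have hPtCD : ∀ k, CD k Pt := fun k => CD.sum _ fun i => (CD_mono k _ _).smul _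
    have hpdPt : ∀ a b, pd a b Pt = ∑ i ∈ Finset.range (m + 1),
        avg (pd i (m - i) G) • pd a b (mono i (m - i)) := by
      intro a b
      rw [hPt, pd_sum _ (fun i => (CD_mono _ _ _).smul _)]
      exact Finset.sum_congr rfl fun i _ => pd_smul _ _
    have hz : ∀ a b, m + 1 ≤ a + b → pd a b Pt = 0 := by
      intro a b hab
      rw [hpdPt]
      refine Finset.sum_eq_zero fun i hi => ?_
      rw [pd_mono_zero (by rw [Finset.mem_range] at hi; omega), smul_zero]
    have htop : ∀ a b, a + b = m → pd a b Pt = fun _ _ => avg (pd a b G) := by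
      intro a b hab
      rw [hpdPt, Finset.sum_eq_single a]
      · have : m - a = b := by omega
        rw [this, pd_mono_self]
        funext u v; simp
      · intro i hi hne
        rw [pd_mono_zero (by rw [Finset.mem_range] at hi; omega), smul_zero]
      · intro h; exact absurd (Finset.mem_range.2 (by omega)) h
    have hG' : CD (m + 1) (G - Pt) := hG.sub (hPtCD _)
    obtain ⟨P', hP', hP'CD, hP'z, hP'N⟩ := H (G - Pt) (hG'.mono (by omega))
    have htopN : ∀ a b, a + b = m → N1 (pd a b (G - Pt)) ≤ 2 * S1 (m + 1) G := by
      intro a b hab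
      rw [pd_sub (hG.mono (by omega)) (hPtCD _), htop a b hab]
      have hcd : CD 1 (pd a b G) := CD.pd (hG.mono (by omega))
      have := poincare hcd
      rw [← pd_succ_left, D2_pd (hG.mono (by omega))] at this
      have t1 := le_S1 (m := m + 1) (a := a + 1) (b := b) (by omega) G
      have t2 := le_S1 (m := m + 1) (a := a) (b := b + 1) (by omega) G
      change N1 (fun u v => pd a b G u v - avg (pd a b G)) ≤ _
      linarith
    have hS : S1 m (G - Pt) ≤ (2 * (m + 1)) * S1 (m + 1) G := by
      unfold S1
      refine (Finset.sum_le_sum (g := fun _ => 2 * S1 (m + 1) G) fun a ha => ?_).trans ?_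
      · exact htopN _ _ (by rw [Finset.mem_range] at ha; omega)
      · simp [S1]; apply le_of_eq; ring
    refine ⟨Pt + P', ?_, ?_, ?_, ?_⟩
    · refine Submodule.add_mem _ (Submodule.sum_mem _ fun i hi => Submodule.smul_mem _ _ ?_)
        (PS_mono (by omega) hP')
      rw [Finset.mem_range] at hi
      exact mono_mem (by omega) (by omega)
    · intro k; exact (hPtCD k).add (hP'CD k)
    · intro a b hab
      rw [pd_add (hPtCD _) (hP'CD _), hz a b hab, hP'z a b (by omega), add_zero]
    · intro a b hab
      have hSn := S1_nonneg (m + 1) G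
      rw [← sub_sub]
      rcases Nat.lt_or_ge (a + b) m with h | h
      · refine (hP'N a b h.le).trans ?_
        have := mul_le_mul_of_nonneg_left hS hC
        nlinarith
      · rw [pd_sub (hG'.mono hab) (hP'CD _), hP'z a b h, sub_zero]
        rcases h.eq_or_lt with h | h
        · have := htopN a b h.symm
          have : 0 ≤ C * (2 * (m + 1)) * S1 (m + 1) G := by positivity
          linarith
        · rw [pd_sub (hG.mono hab) (hPtCD _), hz a b (by omega), sub_zero]
          have := le_S1 (m := m + 1) (a := a) (b := b) (by omega) G
          have : 0 ≤ C * (2 * (m + 1)) * S1 (m + 1) G := by positivity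
          linarith

lemma Om_eq (m : ℕ) (g : ℝ → ℝ → ℝ) :
    Omega2M m g = ∑ a ∈ Finset.range (m + 1), ∫ q, (pd a (m - a) g q.1 q.2) ^ 2 ∂M2 := by
  rw [M2_eq]; rfl

lemma Om_nonneg (m : ℕ) (g : ℝ → ℝ → ℝ) : 0 ≤ Omega2M m g := by
  rw [Om_eq]
  exact Finset.sum_nonneg fun _ _ => integral_nonneg fun _ => sq_nonneg _

lemma S1_le {m : ℕ} {g : ℝ → ℝ → ℝ} (h : CD m g) :
    S1 m g ≤ (m + 1) * Real.sqrt (Omega2M m g) := by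
  unfold S1
  refine (Finset.sum_le_sum (g := fun _ => Real.sqrt (Omega2M m g)) fun a ha => ?_).trans ?_
  · rw [Finset.mem_range] at ha
    refine (N1_le_sqrt (CD.pd (h.mono (by omega)))).trans (Real.sqrt_le_sqrt ?_)
    rw [Om_eq]
    exact Finset.single_le_sum (f := fun a => ∫ q, (pd a (m - a) g q.1 q.2) ^ 2 ∂M2)
      (fun _ _ => integral_nonneg fun _ => sq_nonneg _) (Finset.mem_range.2 ha)
  · simp

lemma local_approx (m : ℕ) (hm : 2 ≤ m) : ∃ C : ℝ, 0 ≤ C ∧ ∀ G, CD m G → ∃ P ∈ PS m,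
    ∀ u ∈ Set.Icc (0:ℝ) 1, ∀ v ∈ Set.Icc (0:ℝ) 1,
      |G u v - P u v| ≤ C * Real.sqrt (Omega2M m G) := by
  obtain ⟨C, hC, H⟩ := deg_approx m
  refine ⟨4 * C * (m + 1), by positivity, fun G hG => ?_⟩
  obtain ⟨P, hP, hPc, -, hN⟩ := H G hG
  refine ⟨P, hP, fun u hu v hv => ?_⟩
  have hF : CD 2 (G - P) := (hG.sub (hPc m)).mono hm
  have := sup_bound hF hu hv
  have n0 := hN 0 0 (by omega)
  have n1 := hN 1 0 (by omega)
  have n2 := hN 0 1 (by omega)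
  have n3 := hN 1 1 (by omega)
  rw [pd_succ_left] at n1 n3
  rw [pd_zero_succ] at n2 n3
  rw [← CD.comm (by rw [pd_zero]; exact hF)] at n3
  rw [pd_zero] at n0 n1 n2 n3
  have hS := mul_le_mul_of_nonneg_left (S1_le hG) hC
  change |(G - P) u v| ≤ _
  nlinarith
end Census12

namespace Census12
open Census MeasureTheory

def node (m : ℕ) (a : Fin m) : ℝ := (a : ℝ) / m
def ell (m : ℕ) (a : Fin m) (u : ℝ) : ℝ := (Lagrange.basis Finset.univ (node m) a).eval u
def itp (m : ℕ) (F : ℝ → ℝ → ℝ) (u v : ℝ) : ℝ :=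
  ∑ a : Fin m, ∑ b : Fin m, F (node m a) (node m b) * (ell m a u * ell m b v)

lemma node_mem (m : ℕ) (a : Fin m) : node m a ∈ Set.Icc (0:ℝ) 1 := by
  unfold node
  have h : (a : ℝ) ≤ m := by exact_mod_cast a.2.le
  exact ⟨by positivity, div_le_one_of_le₀ h (by positivity)⟩

lemma node_inj (m : ℕ) : Function.Injective (node m) := by
  intro a b h
  have hm : (m : ℝ) ≠ 0 := by
    have := a.2
    exact_mod_cast (by omega : m ≠ 0)
  unfold node at h
  rw [div_left_inj' hm] at h
  exact Fin.ext (by exact_mod_cast h)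

lemma rep1 {m : ℕ} {p : Polynomial ℝ} (hp : p.degree < m) (u : ℝ) :
    ∑ a : Fin m, p.eval (node m a) * ell m a u = p.eval u := by
  have := Lagrange.eq_interpolate (s := Finset.univ) (v := node m) (f := p)
    ((node_inj m).injOn) (by simpa using hp)
  conv_rhs => rw [this]
  rw [Lagrange.interpolate_apply, Polynomial.eval_finsetSum]
  simp [ell]

lemma itp_rep {m : ℕ} {P : ℝ → ℝ → ℝ} (hP : P ∈ PS m) (u v : ℝ) : itp m P u v = P u v := by
  unfold PS at hP
  induction hP using Submodule.span_induction with
  | mem f hf =>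
    obtain ⟨p, q, hp, hq, rfl⟩ := hf
    simp only [itp]
    rw [← rep1 hp u, ← rep1 hq v, Finset.sum_mul_sum]
    refine Finset.sum_congr rfl fun a _ => Finset.sum_congr rfl fun b _ => by ring
  | zero => simp [itp]
  | add f g _ _ hf hg =>
    rw [Pi.add_apply, Pi.add_apply, ← hf, ← hg]
    simp [itp, add_mul, Finset.sum_add_distrib]
  | smul c f _ hf =>
    rw [Pi.smul_apply, Pi.smul_apply, ← hf]
    simp [itp, Finset.mul_sum, mul_assoc]

lemma itp_mem (m : ℕ) (F : ℝ → ℝ → ℝ) : itp m F ∈ PS m := by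
  have : itp m F = ∑ a : Fin m, ∑ b : Fin m, F (node m a) (node m b) •
      (fun u v => ell m a u * ell m b v) := by
    funext u v; simp [itp, Finset.sum_apply]
  rw [this]
  refine Submodule.sum_mem _ fun a _ => Submodule.sum_mem _ fun b _ => Submodule.smul_mem _ _
    (Submodule.subset_span ⟨_, _, ?_, ?_, rfl⟩)
  all_goals
    rw [Lagrange.degree_basis ((node_inj m).injOn) (Finset.mem_univ _)]
    have := a.2
    simp only [Finset.card_univ, Fintype.card_fin]
    exact_mod_cast (by omega : m - 1 < m)

lemma deg_comp {m : ℕ} {p : Polynomial ℝ} (hp : p.degree < m) (α β : ℝ) :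
    (p.comp (Polynomial.C α + Polynomial.C β * Polynomial.X)).degree < m := by
  rcases Nat.eq_zero_or_pos m with rfl | hm
  · have : p = 0 := by simpa [Polynomial.degree_lt_iff_coeff_zero, Polynomial.ext_iff] using hp
    simp [this]
  · rw [Polynomial.degree_lt_iff_coeff_zero]
    intro n hn
    apply Polynomial.coeff_eq_zero_of_natDegree_lt
    have h1 : p.natDegree < m := by
      by_cases h0 : p = 0
      · simpa [h0] using hm
      · exact (Polynomial.natDegree_lt_iff_degree_lt h0).2 hp
    have h2 : (Polynomial.C α + Polynomial.C β * Polynomial.X).natDegree ≤ 1 := by compute_degree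
    have h3 := Polynomial.natDegree_comp_le (p := p) (q := Polynomial.C α + Polynomial.C β * Polynomial.X)
    nlinarith

lemma PS_affine {m : ℕ} {P : ℝ → ℝ → ℝ} (hP : P ∈ PS m) (α β γ η : ℝ) :
    (fun u v => P (α + β * u) (γ + η * v)) ∈ PS m := by
  unfold PS at hP
  induction hP using Submodule.span_induction with
  | mem f hf =>
    obtain ⟨p, q, hp, hq, rfl⟩ := hf
    refine Submodule.subset_span ⟨_, _, deg_comp hp α β, deg_comp hq γ η, ?_⟩
    funext u v; simp
  | zero => exact Submodule.zero_mem _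
  | add f g _ _ hf hg => exact Submodule.add_mem _ hf hg
  | smul c f _ hf => exact Submodule.smul_mem _ c hf

lemma ell_bound (m : ℕ) : ∃ Λ : ℝ, 1 ≤ Λ ∧ ∀ a, ∀ u ∈ Set.Icc (0:ℝ) 1, |ell m a u| ≤ Λ := by
  have : ∀ a, ∃ c : ℝ, ∀ u ∈ Set.Icc (0:ℝ) 1, ‖ell m a u‖ ≤ c := fun a =>
    isCompact_Icc.exists_bound_of_continuousOn (Polynomial.continuous _).continuousOn
  choose c hc using this
  refine ⟨1 + ∑ a, |c a|, by have := Finset.sum_nonneg (s := Finset.univ) (fun a _ => abs_nonneg (c a)); linarith, fun a u hu => ?_⟩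
  have h1 := hc a u hu
  have h2 := Finset.single_le_sum (f := fun a => |c a|) (fun a _ => abs_nonneg (c a)) (Finset.mem_univ a)
  have h3 := le_abs_self (c a)
  rw [Real.norm_eq_abs] at h1
  linarith

lemma comb_bound {m : ℕ} {Λ : ℝ} (hΛ : 1 ≤ Λ)
    (h : ∀ a, ∀ u ∈ Set.Icc (0:ℝ) 1, |ell m a u| ≤ Λ) {ε : ℝ}
    (c : Fin m → Fin m → ℝ) (hc : ∀ a b, |c a b| ≤ ε) {u v : ℝ} (hu : u ∈ Set.Icc (0:ℝ) 1)
    (hv : v ∈ Set.Icc (0:ℝ) 1) :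
    |∑ a : Fin m, ∑ b : Fin m, c a b * (ell m a u * ell m b v)| ≤ (m ^ 2 * Λ ^ 2) * ε := by
  have : ∀ a b, |c a b * (ell m a u * ell m b v)| ≤ ε * (Λ * Λ) := by
    intro a b
    rw [abs_mul, abs_mul]
    have h1 := h a u hu
    have h2 := h b v hv
    have h3 := hc a b
    have := (abs_nonneg _).trans h3
    gcongr
  refine (Finset.abs_sum_le_sum_abs _ _).trans ((Finset.sum_le_sum fun a _ =>
    (Finset.abs_sum_le_sum_abs _ _).trans (Finset.sum_le_sum fun b _ => this a b)).trans ?_)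
  simp; apply le_of_eq; ring

lemma itp_local (m : ℕ) (hm : 2 ≤ m) : ∃ C : ℝ, 1 ≤ C ∧ ∀ G, CD m G →
    ∀ u ∈ Set.Icc (0:ℝ) 1, ∀ v ∈ Set.Icc (0:ℝ) 1,
      |G u v - itp m G u v| ≤ C * Real.sqrt (Omega2M m G) := by
  obtain ⟨C, hC, H⟩ := local_approx m hm
  obtain ⟨Λ, hΛ, hL⟩ := ell_bound m
  refine ⟨C + (m ^ 2 * Λ ^ 2) * C + 1, by have : 0 ≤ (m ^ 2 * Λ ^ 2) * C := by positivity
                                          linarith, fun G hG u hu v hv => ?_⟩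
  obtain ⟨P, hP, hb⟩ := H G hG
  have h1 := hb u hu v hv
  have h2 : |itp m G u v - P u v| ≤ (m ^ 2 * Λ ^ 2) * (C * Real.sqrt (Omega2M m G)) := by
    rw [← itp_rep hP u v]
    have e : itp m G u v - itp m P u v = ∑ a : Fin m, ∑ b : Fin m,
       (G (node m a) (node m b) - P (node m a) (node m b)) * (ell m a u * ell m b v) := by
      simp only [itp, ← Finset.sum_sub_distrib, sub_mul]
    rw [e]
    exact comb_bound hΛ hL (fun a b => G (node m a) (node m b) - P (node m a) (node m b))
      (fun a b => hb _ (node_mem m a) _ (node_mem m b)) hu hv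
  have e : G u v - itp m G u v = (G u v - P u v) - (itp m G u v - P u v) := by ring
  rw [e]
  refine (abs_sub _ _).trans ?_
  have := Real.sqrt_nonneg (Omega2M m G)
  nlinarith

/-- rescaled restriction to a grid square -/
def sub (N k l : ℕ) (g : ℝ → ℝ → ℝ) (u v : ℝ) : ℝ := g ((k + u) / N) ((l + v) / N)

lemma CD_sub {n : ℕ} (N k l : ℕ) {g : ℝ → ℝ → ℝ} (h : CD n g) : CD n (sub N k l g) := by
  unfold CD sub
  exact ContDiff.comp (g := fun q : ℝ × ℝ => g q.1 q.2)
    (f := fun q : ℝ × ℝ => ((k + q.1) / (N:ℝ), (l + q.2) / (N:ℝ))) h (by fun_prop)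

lemma D1_sub (c : ℝ) (N k l : ℕ) {f : ℝ → ℝ → ℝ} (h : CD 1 f) :
    D1 (c • sub N k l f) = (c * (1 / N : ℝ)) • sub N k l (D1 f) := by
  funext u v
  have h1 := (h.hasD1 ((k + u) / N) ((l + v) / N)).differentiableAt.hasDerivAt
  have h2 : HasDerivAt (fun t : ℝ => (k + t) / (N:ℝ)) (1 / N) u :=
    ((hasDerivAt_id u).const_add (k:ℝ)).div_const _
  have h3 := (HasDerivAt.comp u h1 h2).const_mul c
  have := h3.deriv
  simp only [D1, sub, Pi.smul_apply, smul_eq_mul]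
  refine Eq.trans this ?_
  ring

lemma D2_sub (c : ℝ) (N k l : ℕ) {f : ℝ → ℝ → ℝ} (h : CD 1 f) :
    D2 (c • sub N k l f) = (c * (1 / N : ℝ)) • sub N k l (D2 f) := by
  funext u v
  have h1 := (h.hasD2 ((k + u) / N) ((l + v) / N)).differentiableAt.hasDerivAt
  have h2 : HasDerivAt (fun t : ℝ => (l + t) / (N:ℝ)) (1 / N) v :=
    ((hasDerivAt_id v).const_add (l:ℝ)).div_const _
  have h3 := (HasDerivAt.comp v h1 h2).const_mul c
  have := h3.deriv
  simp only [D2, sub, Pi.smul_apply, smul_eq_mul]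
  refine Eq.trans this ?_
  ring

lemma pd_subsq {a b : ℕ} (N k l : ℕ) {g : ℝ → ℝ → ℝ} (h : CD (a + b) g) :
    pd a b (sub N k l g) = ((1 / N : ℝ) ^ (a + b)) • sub N k l (pd a b g) := by
  induction a with
  | zero =>
    induction b with
    | zero => simp [pd_zero]
    | succ b ih =>
      rw [pd_zero_succ, ih (h.mono (by omega)), D2_sub _ _ _ _ (CD.pd (h.mono (by omega))),
        ← pd_zero_succ]
      ring_nf
  | succ a ih =>
      rw [pd_succ_left, ih (h.mono (by omega)), D1_sub _ _ _ _ (CD.pd (h.mono (by omega))),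
        ← pd_succ_left]
      ring_nf

lemma sum1 {N : ℕ} (hN : 0 < N) {f : ℝ → ℝ} (hf : Continuous f) :
    ∑ k ∈ Finset.range N, ∫ u, f ((k + u) / N) ∂mu = N * ∫ u, f u ∂mu := by
  have hN' : (N : ℝ) ≠ 0 := by exact_mod_cast hN.ne'
  have e : ∀ h : ℝ → ℝ, ∫ u, h u ∂mu = ∫ u in (0:ℝ)..1, h u := by
    intro h
    rw [intervalIntegral.integral_of_le zero_le_one, ← integral_Icc_eq_integral_Ioc]; rfl
  have h1 : ∀ k : ℕ, ∫ u, f ((k + u) / N) ∂mu =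
      N * ∫ x in ((k:ℕ) / (N:ℝ))..((k + 1 : ℕ) / (N:ℝ)), f x := by
    intro k
    rw [e]
    have := intervalIntegral.integral_comp_add_div (a := 0) (b := 1) f hN' ((k:ℝ) / N)
    simp only [← add_div] at this
    rw [this]; push_cast
    simp
  simp only [h1]
  rw [← Finset.mul_sum, e]
  have := intervalIntegral.sum_integral_adjacent_intervals (f := f) (μ := volume)
    (a := fun k : ℕ => (k : ℝ) / N) (n := N) (fun k _ => hf.intervalIntegrable _ _)
  rw [this]
  simp [hN']

lemma sum2 {N : ℕ} (hN : 0 < N) {f : ℝ → ℝ → ℝ} (hf : Continuous (fun q : ℝ × ℝ => f q.1 q.2)) :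
    ∑ k ∈ Finset.range N, ∑ l ∈ Finset.range N, ∫ q, sub N k l f q.1 q.2 ∂M2 =
      N ^ 2 * ∫ q, f q.1 q.2 ∂M2 := by
  have hφ : Continuous fun x => ∫ v, f x v ∂mu :=
    continuous_parametric_integral_of_continuous (f := f) hf isCompact_Icc
  have hfc : ∀ x, Continuous (f x) := fun x => hf.comp (by fun_prop : Continuous fun v : ℝ => (x, v))
  have hs : ∀ k l : ℕ, Continuous (fun q : ℝ × ℝ => sub N k l f q.1 q.2) := fun k l =>
    hf.comp (by fun_prop : Continuous fun q : ℝ × ℝ => ((k + q.1) / (N:ℝ), (l + q.2) / (N:ℝ)))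
  have e : ∀ k l : ℕ, ∫ q, sub N k l f q.1 q.2 ∂M2 = ∫ u, ∫ v, sub N k l f u v ∂mu ∂mu :=
    fun k l => integral_prod _ (int_M2 (hs k l))
  have e' : ∫ q, f q.1 q.2 ∂M2 = ∫ u, ∫ v, f u v ∂mu ∂mu := integral_prod _ (int_M2 hf)
  have hk : ∀ k ∈ Finset.range N, ∑ l ∈ Finset.range N, ∫ q, sub N k l f q.1 q.2 ∂M2 =
      N * ∫ u, (fun x => ∫ v, f x v ∂mu) ((k + u) / N) ∂mu := by
    intro k _
    simp only [e]
    rw [← integral_finsetSum, ← integral_const_mul]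
    · congr 1; funext u
      exact sum1 hN (hfc _)
    · intro l _
      exact int_mu (continuous_parametric_integral_of_continuous (f := sub N k l f) (hs k l) isCompact_Icc)
  rw [Finset.sum_congr rfl hk, ← Finset.mul_sum, sum1 hN hφ, e']
  ring

lemma sum_Om {m N : ℕ} (hN : 0 < N) {g : ℝ → ℝ → ℝ} (h : CD m g) :
    ∑ k ∈ Finset.range N, ∑ l ∈ Finset.range N, Omega2M m (sub N k l g) =
      ((1 / N : ℝ) ^ m) ^ 2 * N ^ 2 * Omega2M m g := by
  have e : ∀ k l : ℕ, Omega2M m (sub N k l g) = ∑ a ∈ Finset.range (m + 1),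
     ((1 / N : ℝ) ^ m) ^ 2 * ∫ q, sub N k l (fun u v => (pd a (m - a) g u v) ^ 2) q.1 q.2 ∂M2 := by
    intro k l
    rw [Om_eq]
    refine Finset.sum_congr rfl fun a ha => ?_
    have ha' : a + (m - a) = m := by rw [Finset.mem_range] at ha; omega
    rw [pd_subsq N k l (h.mono (by omega)), ha', ← integral_const_mul]
    congr 1; funext q
    simp only [Pi.smul_apply, smul_eq_mul, sub]
    ring
  simp only [e, ← Finset.mul_sum]
  have tri : ∀ X : ℕ → ℕ → ℕ → ℝ, ∑ k ∈ Finset.range N, ∑ l ∈ Finset.range N,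
      ∑ a ∈ Finset.range (m + 1), X k l a = ∑ a ∈ Finset.range (m + 1), ∑ k ∈ Finset.range N,
      ∑ l ∈ Finset.range N, X k l a := by
    intro X
    have : ∀ k ∈ Finset.range N, ∑ l ∈ Finset.range N, ∑ a ∈ Finset.range (m + 1), X k l a =
      ∑ a ∈ Finset.range (m + 1), ∑ l ∈ Finset.range N, X k l a := fun k _ => Finset.sum_comm
    rw [Finset.sum_congr rfl this, Finset.sum_comm]
  rw [tri (fun k l a => ∫ q, sub N k l (fun u v => (pd a (m - a) g u v) ^ 2) q.1 q.2 ∂M2)]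
  rw [Om_eq, mul_assoc, Finset.mul_sum _ _ ((N : ℝ) ^ 2)]
  refine congrArg (((1 / N : ℝ) ^ m) ^ 2 * ·) (Finset.sum_congr rfl fun a ha => ?_)
  rw [Finset.mem_range] at ha
  exact sum2 (f := fun u v => (pd a (m - a) g u v) ^ 2) hN
    ((CD.pd (k := 0) (h.mono (by omega))).cont.pow 2)

/-- grid index -/
def idx (N : ℕ) (u : ℝ) : ℕ := min ⌊(N:ℝ) * u⌋₊ (N - 1)

lemma idx_lt {N : ℕ} (hN : 0 < N) (u : ℝ) : idx N u < N := by unfold idx; omega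

lemma idx_half {N : ℕ} (u : ℝ) : idx (2 * N) u / 2 = idx N u := by
  have : ⌊((2 * N : ℕ):ℝ) * u⌋₊ / 2 = ⌊(N:ℝ) * u⌋₊ := by
    rw [← Nat.floor_div_natCast]; congr 1; push_cast; ring
  unfold idx; omega

lemma idx_mem {N : ℕ} (hN : 0 < N) {u : ℝ} (hu : u ∈ Set.Icc (0:ℝ) 1) :
    (N:ℝ) * u - idx N u ∈ Set.Icc (0:ℝ) 1 := by
  have hn : (0:ℝ) ≤ N * u := mul_nonneg (by positivity) hu.1
  have h1 := Nat.floor_le hn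
  have h2 := Nat.lt_floor_add_one ((N:ℝ) * u)
  have h3 : (N:ℝ) * u ≤ N := by nlinarith [hu.2, (by positivity : (0:ℝ) ≤ N)]
  rcases min_choice ⌊(N:ℝ) * u⌋₊ (N - 1) with h | h
  · unfold idx; rw [h]; constructor <;> linarith
  · have h4 : ((idx N u : ℕ):ℝ) ≤ ⌊(N:ℝ) * u⌋₊ := by exact_mod_cast min_le_left _ _
    have h5 : ((idx N u : ℕ):ℝ) = N - 1 := by
      unfold idx; rw [h]; push_cast [Nat.cast_sub (by omega : 1 ≤ N)]; ring
    constructor <;> linarith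

lemma sum_half (n : ℕ) (f : ℕ → ℝ) :
    ∑ k ∈ Finset.range (2 * n), f (k / 2) = 2 * ∑ k ∈ Finset.range n, f k := by
  induction n with
  | zero => simp
  | succ n ih =>
    rw [show 2 * (n + 1) = 2 * n + 1 + 1 by ring, Finset.sum_range_succ, Finset.sum_range_succ, ih,
      Finset.sum_range_succ, show 2 * n / 2 = n by omega, show (2 * n + 1) / 2 = n by omega]
    ring

/-- Lattice point count. -/
lemma count {ι : Type*} [Fintype ι] [DecidableEq ι] (R t : ℝ) (ht : 0 < t) :
    ∃ Z : Finset (ι → ℤ), (∀ z : ι → ℤ, ∑ i, |(z i : ℝ)| ≤ R → z ∈ Z) ∧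
      (Z.card : ℝ) ≤ Real.exp (t * R) * (1 + 2 / (Real.exp t - 1)) ^ (Fintype.card ι) := by
  classical
  set r : ℕ := ⌈R⌉₊
  set B : Finset (ι → ℤ) := Fintype.piFinset (fun _ => Finset.Icc (-(r:ℤ)) r)
  set x : ℝ := Real.exp (-t) with hx
  have hx0 : 0 < x := Real.exp_pos _
  have hx1 : x < 1 := by rw [hx, Real.exp_lt_one_iff]; linarith
  refine ⟨B.filter (fun z => ∑ i, |(z i : ℝ)| ≤ R), ?_, ?_⟩
  · intro z hz
    rw [Finset.mem_filter]
    refine ⟨?_, hz⟩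
    rw [Fintype.mem_piFinset]
    intro i
    have h1 := Finset.single_le_sum (f := fun i => |(z i : ℝ)|) (fun i _ => abs_nonneg _)
      (Finset.mem_univ i)
    have h2 : |(z i : ℝ)| ≤ r := h1.trans (hz.trans (Nat.le_ceil R))
    have h3 : |z i| ≤ (r : ℤ) := by exact_mod_cast h2
    rw [Finset.mem_Icc]
    exact abs_le.1 h3
  · have hgeo : ∀ r : ℕ, ∑ k ∈ Finset.Icc (-(r:ℤ)) r, Real.exp (-t * |(k:ℝ)|) ≤
        1 + 2 / (Real.exp t - 1) - 2 * x ^ (r + 1) / (1 - x) := by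
      intro r
      have hE : 2 / (Real.exp t - 1) = 2 * x / (1 - x) := by
        have : Real.exp t = x⁻¹ := by rw [hx, Real.exp_neg, inv_inv]
        rw [this]
        have : 1 - x ≠ 0 := by linarith
        field_simp
      have h1x : 1 - x ≠ 0 := by linarith
      rw [hE]
      induction r with
      | zero => simp
      | succ r ih =>
        have hI : Finset.Icc (-((r + 1 : ℕ):ℤ)) ((r + 1 : ℕ):ℤ) =
            insert (-((r + 1 : ℕ):ℤ)) (insert ((r + 1 : ℕ):ℤ) (Finset.Icc (-(r:ℤ)) r)) := by
          ext k; simp only [Finset.mem_Icc, Finset.mem_insert]; push_cast; omega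
        rw [hI, Finset.sum_insert, Finset.sum_insert]
        · have e1 : Real.exp (-t * |(((r + 1 : ℕ):ℤ):ℝ)|) = x ^ (r + 1) := by
            rw [hx, ← Real.exp_nat_mul]
            congr 1
            rw [abs_of_nonneg (by positivity)]; push_cast; ring
          have e2 : Real.exp (-t * |((-((r + 1 : ℕ):ℤ) : ℤ):ℝ)|) = x ^ (r + 1) := by
            rw [← e1]; push_cast; rw [abs_neg]
          rw [e1, e2]
          have : 2 * x ^ (r + 1) / (1 - x) = 2 * x ^ (r + 1) + 2 * x ^ (r + 1 + 1) / (1 - x) := by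
            field_simp; ring
          linarith
        · simp
        · simp only [Finset.mem_Icc, Finset.mem_insert]; push_cast; omega
    have hgeo' : ∑ k ∈ Finset.Icc (-(r:ℤ)) r, Real.exp (-t * |(k:ℝ)|) ≤
        1 + 2 / (Real.exp t - 1) := by
      have : 0 ≤ 2 * x ^ (r + 1) / (1 - x) := div_nonneg (by positivity) (by linarith)
      linarith [hgeo r]
    calc ((B.filter (fun z => ∑ i, |(z i : ℝ)| ≤ R)).card : ℝ)
        = ∑ z ∈ B.filter (fun z => ∑ i, |(z i : ℝ)| ≤ R), (1:ℝ) := by simp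
      _ ≤ ∑ z ∈ B.filter (fun z => ∑ i, |(z i : ℝ)| ≤ R),
            Real.exp (t * R) * ∏ i, Real.exp (-t * |(z i : ℝ)|) := by
          refine Finset.sum_le_sum fun z hz => ?_
          rw [← Real.exp_sum, ← Real.exp_add, ← Finset.mul_sum]
          apply Real.one_le_exp
          have := (Finset.mem_filter.1 hz).2
          nlinarith
      _ ≤ ∑ z ∈ B, Real.exp (t * R) * ∏ i, Real.exp (-t * |(z i : ℝ)|) :=
          Finset.sum_le_sum_of_subset_of_nonneg (Finset.filter_subset _ _)
            (fun z _ _ => by positivity)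
      _ = Real.exp (t * R) * ∏ _i : ι, ∑ k ∈ Finset.Icc (-(r:ℤ)) r, Real.exp (-t * |(k:ℝ)|) := by
          rw [← Finset.mul_sum, Finset.prod_univ_sum]
      _ ≤ _ := by
          rw [Finset.prod_const, Finset.card_univ]
          gcongr

/-- truncated quantisation -/
lemma quant (ε c : ℝ) (hε : 0 < ε) : ∃ z : ℤ, |c - ε * z| ≤ ε ∧ ε * |(z:ℝ)| ≤ |c| := by
  have hf := Nat.floor_le (div_nonneg (abs_nonneg c) hε.le)
  have hf2 := (Nat.lt_floor_add_one (|c| / ε)).le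
  rw [le_div_iff₀ hε] at hf
  rw [div_le_iff₀ hε] at hf2
  rcases le_total 0 c with h | h
  · rw [abs_of_nonneg h] at *
    refine ⟨(⌊c / ε⌋₊ : ℤ), ?_, ?_⟩
    · push_cast
      rw [abs_le]; constructor <;> nlinarith
    · push_cast; rw [abs_of_nonneg (by positivity)]; nlinarith
  · rw [abs_of_nonpos h] at *
    refine ⟨-(⌊-c / ε⌋₊ : ℤ), ?_, ?_⟩
    · push_cast
      rw [abs_le]; constructor <;> nlinarith
    · push_cast; rw [abs_neg, abs_of_nonneg (by positivity)]; nlinarith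

end Census12

namespace Census12
open Census MeasureTheory

def lev (m N : ℕ) (c : ℕ → ℕ → Fin m → Fin m → ℝ) (u v : ℝ) : ℝ :=
  ∑ a : Fin m, ∑ b : Fin m, c (idx N u) (idx N v) a b *
    (ell m a (N * u - idx N u) * ell m b (N * v - idx N v))

lemma lev_cover (m : ℕ) {Λ : ℝ} (hΛ : 1 ≤ Λ)
    (hL : ∀ a, ∀ u ∈ Set.Icc (0:ℝ) 1, |ell m a u| ≤ Λ) {N : ℕ} (hN : 0 < N) {ε E t : ℝ}
    (hε : 0 < ε) (ht : 0 < t) :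
    ∃ T : Finset (ℝ → ℝ → ℝ),
      (T.card : ℝ) ≤ Real.exp (t * (E / ε ^ 2)) * (1 + 2 / (Real.exp t - 1)) ^ (N * N * (m * m)) ∧
      ∀ c : ℕ → ℕ → Fin m → Fin m → ℝ,
        (∑ k ∈ Finset.range N, ∑ l ∈ Finset.range N, ∑ a, ∑ b, (c k l a b) ^ 2 ≤ E) →
        ∃ f ∈ T, ∀ u ∈ Set.Icc (0:ℝ) 1, ∀ v ∈ Set.Icc (0:ℝ) 1,
          |lev m N c u v - f u v| ≤ (m ^ 2 * Λ ^ 2) * ε := by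
  classical
  obtain ⟨Z, hZ, hcard⟩ := count (ι := Fin N × Fin N × Fin m × Fin m) (E / ε ^ 2) t ht
  set ext : (Fin N × Fin N × Fin m × Fin m → ℤ) → ℕ → ℕ → Fin m → Fin m → ℝ :=
    fun z k l a b => if h : k < N ∧ l < N then ε * z (⟨k, h.1⟩, ⟨l, h.2⟩, a, b) else 0 with hext
  refine ⟨Z.image (fun z => lev m N (ext z)), ?_, ?_⟩
  · refine (Nat.cast_le.2 Finset.card_image_le).trans (hcard.trans (le_of_eq ?_))
    simp only [Fintype.card_prod, Fintype.card_fin]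
    ring_nf
  · intro c hc
    choose z hz1 hz2 using fun i : Fin N × Fin N × Fin m × Fin m =>
      quant ε (c i.1 i.2.1 i.2.2.1 i.2.2.2) hε
    have hc' : ∑ i : Fin N × Fin N × Fin m × Fin m, (c i.1 i.2.1 i.2.2.1 i.2.2.2) ^ 2 ≤ E := by
      refine le_trans (le_of_eq ?_) hc
      rw [← Fin.sum_univ_eq_sum_range (fun k => ∑ l ∈ Finset.range N, ∑ a, ∑ b, (c k l a b) ^ 2)]
      simp only [Fintype.sum_prod_type]
      refine Finset.sum_congr rfl fun k _ => ?_
      rw [← Fin.sum_univ_eq_sum_range (fun l => ∑ a, ∑ b, (c k l a b) ^ 2)]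
    have hmem : z ∈ Z := by
      apply hZ
      rw [le_div_iff₀ (by positivity), Finset.sum_mul]
      refine le_trans (Finset.sum_le_sum fun i _ => ?_) hc'
      have h1 : |(z i : ℝ)| ≤ (z i : ℝ) ^ 2 := by
        rw [← sq_abs]
        have : |z i| ≤ |z i| ^ 2 := by
          rcases (abs_nonneg (z i)).eq_or_lt with h | h
          · rw [← h]; norm_num
          · nlinarith
        exact_mod_cast this
      have h2 : (ε * |(z i : ℝ)|) ^ 2 ≤ |c i.1 i.2.1 i.2.2.1 i.2.2.2| ^ 2 :=
        pow_le_pow_left₀ (by positivity) (hz2 i) 2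
      rw [sq_abs, mul_pow, sq_abs] at h2
      have : 0 < ε ^ 2 := by positivity
      nlinarith
    refine ⟨_, Finset.mem_image_of_mem _ hmem, fun u hu v hv => ?_⟩
    have e : lev m N c u v - lev m N (ext z) u v = ∑ a : Fin m, ∑ b : Fin m,
        (c (idx N u) (idx N v) a b - ext z (idx N u) (idx N v) a b) *
        (ell m a (N * u - idx N u) * ell m b (N * v - idx N v)) := by
      simp only [lev, ← Finset.sum_sub_distrib, sub_mul]
    rw [e]
    refine comb_bound hΛ hL (fun a b => c (idx N u) (idx N v) a b - ext z (idx N u) (idx N v) a b)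
      (fun a b => ?_) (idx_mem hN hu) (idx_mem hN hv)
    have hh : idx N u < N ∧ idx N v < N := ⟨idx_lt hN u, idx_lt hN v⟩
    simp only [hext, hh, and_self, dif_pos]
    exact hz1 (⟨idx N u, hh.1⟩, ⟨idx N v, hh.2⟩, a, b)

/-- coarse coefficients -/
def c0 (m N : ℕ) (g : ℝ → ℝ → ℝ) (k l : ℕ) (a b : Fin m) : ℝ := sub N k l g (node m a) (node m b)

/-- detail coefficients -/
def c1 (m N : ℕ) (g : ℝ → ℝ → ℝ) (k l : ℕ) (a b : Fin m) : ℝ :=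
  sub (2 * N) k l g (node m a) (node m b) -
    itp m (sub N (k / 2) (l / 2) g) (((k % 2 : ℕ) + node m a) / 2) (((l % 2 : ℕ) + node m b) / 2)

lemma lev_c0 (m N : ℕ) (g : ℝ → ℝ → ℝ) (u v : ℝ) : lev m N (c0 m N g) u v =
    itp m (sub N (idx N u) (idx N v) g) (N * u - idx N u) (N * v - idx N v) := rfl

lemma half_cast (k : ℕ) : (k : ℝ) = 2 * (k / 2 : ℕ) + (k % 2 : ℕ) := by
  exact_mod_cast (Nat.div_add_mod k 2).symm

lemma lev_step (m N : ℕ) (g : ℝ → ℝ → ℝ) (u v : ℝ) :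
    lev m (2 * N) (c0 m (2 * N) g) u v - lev m N (c0 m N g) u v =
      lev m (2 * N) (c1 m N g) u v := by
  set k := idx (2 * N) u with hk
  set l := idx (2 * N) v with hl
  have hk2 : idx N u = k / 2 := (idx_half u).symm
  have hl2 : idx N v = l / 2 := (idx_half v).symm
  set H : ℝ → ℝ → ℝ := fun s t =>
    itp m (sub N (k / 2) (l / 2) g) (((k % 2 : ℕ) + s) / 2) (((l % 2 : ℕ) + t) / 2) with hH
  have hHm : H ∈ PS m := by
    have := PS_affine (itp_mem m (sub N (k / 2) (l / 2) g)) ((k % 2 : ℕ) / 2) (1 / 2)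
      ((l % 2 : ℕ) / 2) (1 / 2)
    convert this using 4 <;> ring
  have e1 : lev m (2 * N) (c1 m N g) u v =
      lev m (2 * N) (c0 m (2 * N) g) u v - itp m H ((2 * N : ℕ) * u - k) ((2 * N : ℕ) * v - l) := by
    simp only [lev, c0, c1, sub_mul, Finset.sum_sub_distrib]
    rfl
  rw [e1, itp_rep hHm, lev_c0 m N, hk2, hl2]
  have hkc := half_cast k
  have hlc := half_cast l
  simp only [hH]
  congr 2
  · rw [hkc]; push_cast; ring
  · rw [hlc]; push_cast; ring

lemma tele (m : ℕ) (g : ℝ → ℝ → ℝ) (u v : ℝ) (L : ℕ) :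
    lev m (2 ^ L) (c0 m (2 ^ L) g) u v = ∑ j ∈ Finset.range (L + 1),
      lev m (2 ^ j) (if j = 0 then c0 m 1 g else c1 m (2 ^ (j - 1)) g) u v := by
  induction L with
  | zero => simp
  | succ L ih =>
    rw [Finset.sum_range_succ, ← ih]
    have := lev_step m (2 ^ L) g u v
    simp only [Nat.add_eq_zero_iff, one_ne_zero, and_false, if_false, Nat.add_sub_cancel]
    rw [pow_succ, mul_comm (2 ^ L) 2, ← this]; ring

/-- energies at every level -/
lemma energy (m : ℕ) (hm : 2 ≤ m) {b C : ℝ} (hC1 : 1 ≤ C)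
    (hC : ∀ G, CD m G → ∀ u ∈ Set.Icc (0:ℝ) 1, ∀ v ∈ Set.Icc (0:ℝ) 1,
      |G u v - itp m G u v| ≤ C * Real.sqrt (Omega2M m G))
    {g : ℝ → ℝ → ℝ} (hg : CD m g) (hO : Omega2M m g ≤ 1)
    (hgb : ∀ u ∈ Set.Icc (0:ℝ) 1, ∀ v ∈ Set.Icc (0:ℝ) 1, |g u v| ≤ b) (j : ℕ) :
    ∑ k ∈ Finset.range (2 ^ j), ∑ l ∈ Finset.range (2 ^ j), ∑ a, ∑ b',
      ((if j = 0 then c0 m 1 g else c1 m (2 ^ (j - 1)) g) k l a b') ^ 2 ≤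
      (m ^ 2 * C ^ 2 * 4 ^ m + m ^ 2 * b ^ 2) * (4 ^ j / 4 ^ (j * m)) := by
  rcases j with _ | j
  · simp only [pow_zero, Finset.range_one, Finset.sum_singleton, if_true, zero_mul]
    have : ∀ a b', (c0 m 1 g 0 0 a b') ^ 2 ≤ b ^ 2 := by
      intro a b'
      have h := hgb _ (node_mem m a) _ (node_mem m b')
      have e : c0 m 1 g 0 0 a b' = g (node m a) (node m b') := by simp [c0, sub]
      rw [e, ← sq_abs]
      exact pow_le_pow_left₀ (abs_nonneg _) h 2
    refine (Finset.sum_le_sum fun a _ => Finset.sum_le_sum fun b' _ => this a b').trans ?_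
    simp only [Finset.sum_const, Finset.card_univ, Fintype.card_fin, nsmul_eq_mul]
    have : 0 ≤ (m:ℝ) ^ 2 * C ^ 2 * 4 ^ m := by positivity
    nlinarith
  · simp only [Nat.add_eq_zero_iff, one_ne_zero, and_false, if_false, Nat.add_sub_cancel]
    set N := 2 ^ j with hNdef
    have hN : 0 < N := by positivity
    have hN0 : (N : ℝ) ≠ 0 := by exact_mod_cast hN.ne'
    have hb1 : ∀ k l a b', (c1 m N g k l a b') ^ 2 ≤
        C ^ 2 * Omega2M m (sub N (k / 2) (l / 2) g) := by
      intro k l a b'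
      have hmem : ∀ (k : ℕ) (a : Fin m), ((k % 2 : ℕ) + node m a) / 2 ∈ Set.Icc (0:ℝ) 1 := by
        intro k a
        have h1 := node_mem m a
        have h2 : ((k % 2 : ℕ) : ℝ) ≤ 1 := by exact_mod_cast (by omega : k % 2 ≤ 1)
        have h3 : (0:ℝ) ≤ ((k % 2 : ℕ) : ℝ) := by positivity
        constructor <;> linarith [h1.1, h1.2]
      have h := hC _ (CD_sub N (k / 2) (l / 2) hg) _ (hmem k a) _ (hmem l b')
      have e : ∀ (k : ℕ) (x : ℝ), (k + x) / ((2 * N : ℕ) : ℝ) =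
          ((k / 2 : ℕ) + ((k % 2 : ℕ) + x) / 2) / N := by
        intro k x
        rw [half_cast k]; push_cast; field_simp; ring
      have e2 : c1 m N g k l a b' = sub N (k / 2) (l / 2) g (((k % 2 : ℕ) + node m a) / 2)
          (((l % 2 : ℕ) + node m b') / 2) - itp m (sub N (k / 2) (l / 2) g)
          (((k % 2 : ℕ) + node m a) / 2) (((l % 2 : ℕ) + node m b') / 2) := by
        unfold c1
        congr 1
        simp only [sub]
        rw [e, e]
      rw [e2, ← sq_abs]
      refine (pow_le_pow_left₀ (abs_nonneg _) h 2).trans (le_of_eq ?_)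
      rw [mul_pow, Real.sq_sqrt (Om_nonneg _ _)]
    rw [pow_succ 2 j, ← hNdef, mul_comm N 2]
    calc _ ≤ ∑ k ∈ Finset.range (2 * N), ∑ l ∈ Finset.range (2 * N),
          (m ^ 2 * C ^ 2) * Omega2M m (sub N (k / 2) (l / 2) g) := by
          refine Finset.sum_le_sum fun k _ => Finset.sum_le_sum fun l _ => ?_
          refine (Finset.sum_le_sum fun a _ => Finset.sum_le_sum fun b' _ => hb1 k l a b').trans ?_
          simp only [Finset.sum_const, Finset.card_univ, Fintype.card_fin, nsmul_eq_mul]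
          apply le_of_eq; ring
      _ = (m ^ 2 * C ^ 2) * (2 * (2 * (((1 / N : ℝ) ^ m) ^ 2 * N ^ 2 * Omega2M m g))) := by
          simp only [← Finset.mul_sum]
          rw [← sum_Om hN hg]
          have : ∀ k, ∑ l ∈ Finset.range (2 * N), Omega2M m (sub N (k / 2) (l / 2) g) =
            2 * ∑ l ∈ Finset.range N, Omega2M m (sub N (k / 2) l g) := fun k =>
              sum_half N (fun l => Omega2M m (sub N (k / 2) l g))
          simp only [this, ← Finset.mul_sum]
          rw [sum_half N (fun k => ∑ l ∈ Finset.range N, Omega2M m (sub N k l g))]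
      _ ≤ (m ^ 2 * C ^ 2) * (2 * (2 * (((1 / N : ℝ) ^ m) ^ 2 * N ^ 2 * 1))) := by
          gcongr
      _ = (m ^ 2 * C ^ 2 * 4 ^ m) * (4 ^ (j + 1) / 4 ^ ((j + 1) * m)) := by
          have h4 : (N:ℝ) ^ 2 = 4 ^ j := by
            rw [hNdef]; push_cast; rw [← pow_mul, mul_comm j 2, pow_mul]; norm_num
          have h5 : ((1 / N : ℝ) ^ m) ^ 2 = 1 / 4 ^ (j * m) := by
            rw [← pow_mul, mul_comm m 2, pow_mul, div_pow, h4, one_pow, div_pow, ← pow_mul, one_pow]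
          rw [h4, h5, add_mul, pow_add 4 (j * m), one_mul, pow_succ 4 j]
          field_simp; ring
      _ ≤ _ := by
          have : 0 ≤ (m:ℝ) ^ 2 * b ^ 2 * (4 ^ (j + 1) / 4 ^ ((j + 1) * m)) := by positivity
          nlinarith

lemma final_err (m : ℕ) (hm : 2 ≤ m) {C : ℝ} (hC1 : 1 ≤ C)
    (hC : ∀ G, CD m G → ∀ u ∈ Set.Icc (0:ℝ) 1, ∀ v ∈ Set.Icc (0:ℝ) 1,
      |G u v - itp m G u v| ≤ C * Real.sqrt (Omega2M m G))
    {g : ℝ → ℝ → ℝ} (hg : CD m g) (hO : Omega2M m g ≤ 1) {N : ℕ} (hN : 0 < N) {u v : ℝ}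
    (hu : u ∈ Set.Icc (0:ℝ) 1) (hv : v ∈ Set.Icc (0:ℝ) 1) :
    |g u v - lev m N (c0 m N g) u v| ≤ C * (1 / N) := by
  have hN0 : (N : ℝ) ≠ 0 := by exact_mod_cast hN.ne'
  rw [lev_c0]
  have h := hC _ (CD_sub N (idx N u) (idx N v) hg) _ (idx_mem hN hu) _ (idx_mem hN hv)
  have e : sub N (idx N u) (idx N v) g (N * u - idx N u) (N * v - idx N v) = g u v := by
    simp only [sub]; congr 1 <;> field_simp <;> ring
  rw [e] at h
  refine h.trans ?_
  gcongr
  apply Real.sqrt_le_iff.2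
  refine ⟨by positivity, ?_⟩
  have hs := sum_Om hN hg
  have h1 : Omega2M m (sub N (idx N u) (idx N v) g) ≤
      ∑ k ∈ Finset.range N, ∑ l ∈ Finset.range N, Omega2M m (sub N k l g) := by
    refine le_trans ?_ (Finset.single_le_sum (f := fun k => ∑ l ∈ Finset.range N,
      Omega2M m (sub N k l g)) (fun k _ => Finset.sum_nonneg fun l _ => Om_nonneg _ _)
      (Finset.mem_range.2 (idx_lt hN u)))
    exact Finset.single_le_sum (f := fun l => Omega2M m (sub N (idx N u) l g))
      (fun l _ => Om_nonneg _ _) (Finset.mem_range.2 (idx_lt hN v))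
  rw [hs] at h1
  refine h1.trans ?_
  have hle : (1 / N : ℝ) ^ m ≤ (1 / N) ^ 2 := by
    apply pow_le_pow_of_le_one (by positivity) _ hm
    rw [div_le_one (by positivity)]
    exact_mod_cast hN
  calc ((1 / N : ℝ) ^ m) ^ 2 * (N:ℝ) ^ 2 * Omega2M m g ≤
        ((1 / N : ℝ) ^ 2) ^ 2 * (N:ℝ) ^ 2 * 1 := by
          have := Om_nonneg m g
          gcongr
    _ = (1 / (N:ℝ)) ^ 2 := by field_simp
end Census12

namespace Census12
open Census MeasureTheory

lemma num_dense (m j d : ℕ) {A : ℝ} (hA : 0 ≤ A) :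
    ∃ t : ℝ, 0 < t ∧
      Real.exp (t * ((A * (4 ^ j / 4 ^ (j * m))) / ((1 / 2 : ℝ) ^ (m * (j + d)) * (3 / 4) ^ d) ^ 2)) *
        (1 + 2 / (Real.exp t - 1)) ^ (2 ^ j * 2 ^ j * (m * m)) ≤
      Real.exp (4 ^ (j + d) * (3 * A + 4 * m ^ 2 * (m + 1)) * (8 / 9) ^ d) := by
  refine ⟨(1 / 4 : ℝ) ^ ((m + 1) * d), by positivity, ?_⟩
  set t : ℝ := (1 / 4 : ℝ) ^ ((m + 1) * d) with ht
  have htpos : 0 < t := by positivity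
  have hR : (A * (4 ^ j / 4 ^ (j * m))) / ((1 / 2 : ℝ) ^ (m * (j + d)) * (3 / 4) ^ d) ^ 2 =
      A * 4 ^ j * (4 ^ (m * d) * (16 / 9) ^ d) := by
    have h1 : ((1 / 2 : ℝ) ^ (m * (j + d))) ^ 2 = 1 / (4 ^ (j * m) * 4 ^ (m * d)) := by
      rw [← pow_mul, mul_comm _ 2, pow_mul, ← pow_add, one_div_pow, one_div_pow]
      norm_num; ring_nf
    have h2 : (((3:ℝ) / 4) ^ d) ^ 2 = 1 / (16 / 9) ^ d := by
      rw [← pow_mul, mul_comm _ 2, pow_mul, ← one_div_pow]; norm_num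
    rw [mul_pow, h1, h2]
    field_simp
  rw [hR]
  have h1 : t * (A * 4 ^ j * (4 ^ (m * d) * (16 / 9) ^ d)) ≤ A * 4 ^ j := by
    have h3 : t * (4 ^ (m * d) * (16 / 9) ^ d) ≤ 1 := by
      have : (16 / 9 : ℝ) ^ d ≤ 4 ^ d := pow_le_pow_left₀ (by norm_num) (by norm_num) d
      calc t * (4 ^ (m * d) * (16 / 9) ^ d) ≤ t * (4 ^ (m * d) * 4 ^ d) := by gcongr
        _ = 1 := by
          rw [ht, ← pow_add, one_div_pow, show m * d + d = (m + 1) * d by ring]; field_simp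
    have h4 : 0 ≤ A * 4 ^ j := by positivity
    nlinarith
  have h2 : 1 + 2 / (Real.exp t - 1) ≤ Real.exp (2 + 2 * ((m + 1) * d)) := by
    have he : t ≤ Real.exp t - 1 := by linarith [Real.add_one_le_exp t]
    have e4 : (4:ℝ) ≤ Real.exp 2 := by
      have := Real.quadratic_le_exp_of_nonneg (x := 2) (by norm_num)
      linarith
    have hq : (1:ℝ) ≤ 4 ^ ((m + 1) * d) := one_le_pow₀ (by norm_num)
    calc 1 + 2 / (Real.exp t - 1) ≤ 1 + 2 / t := by gcongr
      _ = 1 + 2 * 4 ^ ((m + 1) * d) := by rw [ht, one_div_pow]; field_simp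
      _ ≤ 4 * 4 ^ ((m + 1) * d) := by linarith
      _ ≤ Real.exp 2 * (Real.exp 2) ^ ((m + 1) * d) := by gcongr
      _ = _ := by
        rw [← Real.exp_nat_mul, ← Real.exp_add]; push_cast; ring_nf
  have h0 : 0 ≤ 1 + 2 / (Real.exp t - 1) := by
    have : 0 < Real.exp t - 1 := by linarith [Real.add_one_lt_exp htpos.ne']
    positivity
  calc _ ≤ Real.exp (A * 4 ^ j) * (Real.exp (2 + 2 * ((m + 1) * d))) ^ (2 ^ j * 2 ^ j * (m * m)) := by
        gcongr
    _ = Real.exp (A * 4 ^ j + 4 ^ j * m ^ 2 * (2 + 2 * ((m + 1) * d))) := by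
        rw [← Real.exp_nat_mul, ← Real.exp_add]
        congr 2
        push_cast
        rw [← mul_pow, show (2:ℝ) * 2 = 4 by norm_num]; ring
    _ ≤ _ := by
        apply Real.exp_le_exp.2
        have hd : (1 + d : ℝ) ≤ 2 ^ d := by
          have : d + 1 ≤ 2 ^ d := Nat.lt_two_pow_self
          have : ((d + 1 : ℕ) : ℝ) ≤ ((2 ^ d : ℕ) : ℝ) := by exact_mod_cast this
          push_cast at this; linarith
        have h29 : (2:ℝ) ^ d ≤ 4 ^ d * (8 / 9) ^ d := by
          rw [← mul_pow]; exact pow_le_pow_left₀ (by norm_num) (by norm_num) d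
        have h3 : A * 4 ^ j ≤ 4 ^ j * (A * (4 ^ d * (8 / 9) ^ d)) := by
          have : 1 ≤ (4 ^ d * (8 / 9) ^ d : ℝ) := by
            rw [← mul_pow]; exact one_le_pow₀ (by norm_num)
          nlinarith [show 0 ≤ A * 4 ^ j by positivity]
        have h4 : (4:ℝ) ^ j * m ^ 2 * (2 + 2 * ((m + 1) * d)) ≤
            4 ^ j * (2 * m ^ 2 * (m + 1) * (4 ^ d * (8 / 9) ^ d)) := by
          have : (2 + 2 * ((m + 1) * d) : ℝ) ≤ 2 * (m + 1) * (4 ^ d * (8 / 9) ^ d) := by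
            have h5 : (2 + 2 * ((m + 1) * d) : ℝ) ≤ 2 * (m + 1) * (1 + d) := by
              nlinarith [show (0:ℝ) ≤ m by positivity]
            refine h5.trans ?_
            gcongr
            linarith
          calc _ ≤ (4:ℝ) ^ j * m ^ 2 * (2 * (m + 1) * (4 ^ d * (8 / 9) ^ d)) := by gcongr
            _ = _ := by ring
        have h6 : 0 ≤ (4:ℝ) ^ j * ((2 * A + 2 * m ^ 2 * (m + 1)) * (4 ^ d * (8 / 9) ^ d)) := by
          positivity
        rw [pow_add]
        nlinarith

lemma num_sparse (m : ℕ) (hm : 2 ≤ m) (M d : ℕ) (hd : 1 ≤ d) {A : ℝ} (hA : 0 ≤ A) :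
    ∃ t : ℝ, 0 < t ∧
      Real.exp (t * ((A * (4 ^ (M + d) / 4 ^ ((M + d) * m))) /
        ((1 / 2 : ℝ) ^ (m * M) * (3 / 4) ^ d) ^ 2)) *
        (1 + 2 / (Real.exp t - 1)) ^ (2 ^ (M + d) * 2 ^ (M + d) * (m * m)) ≤
      Real.exp (4 ^ M * (3 * A + 4 * m ^ 2 * (m + 1)) * (8 / 9) ^ d) := by
  have hlog : 0 < Real.log 16 := Real.log_pos (by norm_num)
  have hlog3 : Real.log 16 ≤ 3 := by
    have : Real.log 16 = 4 * Real.log 2 := by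
      rw [show (16:ℝ) = 2 ^ 4 by norm_num, Real.log_pow]; norm_num
    rw [this]; linarith [Real.log_two_lt_d9]
  have hd0 : (0:ℝ) < d := by exact_mod_cast hd
  refine ⟨d * Real.log 16, by positivity, ?_⟩
  have hexp : Real.exp (d * Real.log 16) = 16 ^ d := by
    rw [Real.exp_nat_mul, Real.exp_log (by norm_num)]
  have h16 : (16:ℝ) ≤ 16 ^ d := by
    calc (16:ℝ) = 16 ^ 1 := by norm_num
      _ ≤ 16 ^ d := pow_le_pow_right₀ (by norm_num) hd
  rw [hexp]
  have hR : (A * (4 ^ (M + d) / 4 ^ ((M + d) * m))) /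
      ((1 / 2 : ℝ) ^ (m * M) * (3 / 4) ^ d) ^ 2 ≤ A * 4 ^ M * (4 / 9) ^ d := by
    have h1 : ((1 / 2 : ℝ) ^ (m * M)) ^ 2 = 1 / 4 ^ (M * m) := by
      rw [← pow_mul, mul_comm _ 2, pow_mul, one_div_pow, one_div_pow]
      norm_num; ring_nf
    have h2 : (((3:ℝ) / 4) ^ d) ^ 2 = (9 / 16) ^ d := by
      rw [← pow_mul, mul_comm _ 2, pow_mul]; norm_num
    have h3 : (4:ℝ) ^ (2 * d) ≤ 4 ^ (m * d) := by
      apply pow_le_pow_right₀ (by norm_num)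
      gcongr
    rw [mul_pow, h1, h2, add_mul, pow_add, pow_add, mul_comm d m]
    have e : A * (4 ^ M * 4 ^ d / (4 ^ (M * m) * 4 ^ (m * d))) / (1 / 4 ^ (M * m) * (9 / 16) ^ d) =
      A * 4 ^ M * 4 ^ d / (4 ^ (m * d) * (9 / 16) ^ d) := by
      field_simp
    have e2 : A * 4 ^ M * 4 ^ d / (4 ^ (2 * d) * (9 / 16) ^ d) = A * 4 ^ M * (4 / 9) ^ d := by
      rw [mul_div_assoc]; congr 1
      rw [pow_mul, ← mul_pow, ← div_pow]; norm_num
    rw [e, ← e2]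
    gcongr
  have hd2 : (d:ℝ) ≤ 2 ^ d := by exact_mod_cast (Nat.lt_two_pow_self (n := d)).le
  have h1 : d * Real.log 16 * ((A * (4 ^ (M + d) / 4 ^ ((M + d) * m))) /
      ((1 / 2 : ℝ) ^ (m * M) * (3 / 4) ^ d) ^ 2) ≤ 4 ^ M * (3 * A) * (8 / 9) ^ d := by
    calc _ ≤ (2 ^ d * 3) * (A * 4 ^ M * (4 / 9) ^ d) := by gcongr
      _ = 4 ^ M * (3 * A) * (2 ^ d * (4 / 9) ^ d) := by ring
      _ = _ := by rw [← mul_pow]; norm_num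
  have h2 : 1 + 2 / ((16:ℝ) ^ d - 1) ≤ Real.exp (4 / 16 ^ d) := by
    have : 2 / ((16:ℝ) ^ d - 1) ≤ 4 / 16 ^ d := by
      rw [div_le_div_iff₀ (by linarith) (by linarith)]; linarith
    linarith [Real.add_one_le_exp (4 / (16:ℝ) ^ d)]
  have h0 : 0 ≤ 1 + 2 / ((16:ℝ) ^ d - 1) := by
    have : 0 < (16:ℝ) ^ d - 1 := by linarith
    positivity
  calc _ ≤ Real.exp (4 ^ M * (3 * A) * (8 / 9) ^ d) *
        (Real.exp (4 / 16 ^ d)) ^ (2 ^ (M + d) * 2 ^ (M + d) * (m * m)) := by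
        gcongr
    _ = Real.exp (4 ^ M * (3 * A) * (8 / 9) ^ d + 4 ^ M * (4 * m ^ 2) * (1 / 4) ^ d) := by
        rw [← Real.exp_nat_mul, ← Real.exp_add]
        congr 2
        push_cast
        rw [← mul_pow, show (16:ℝ) ^ d = 4 ^ d * 4 ^ d by rw [← mul_pow]; norm_num, one_div_pow,
          show (2:ℝ) * 2 = 4 by norm_num, pow_add]
        field_simp
    _ ≤ _ := by
        apply Real.exp_le_exp.2
        have h3 : (1 / 4 : ℝ) ^ d ≤ (8 / 9) ^ d := pow_le_pow_left₀ (by norm_num) (by norm_num) d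
        have h4 : (4:ℝ) ^ M * (4 * m ^ 2) * (1 / 4) ^ d ≤
            4 ^ M * (4 * m ^ 2 * (m + 1)) * (8 / 9) ^ d := by
          have : (4 * m ^ 2 : ℝ) ≤ 4 * m ^ 2 * (m + 1) := by
            nlinarith [show (0:ℝ) ≤ 4 * m ^ 2 * m by positivity]
          gcongr
        linarith

def dd (j M : ℕ) : ℕ := (j - M) + (M - j)

lemma geo (r : ℝ) (h0 : 0 ≤ r) (h1 : r < 1) (M n : ℕ) :
    ∑ j ∈ Finset.range n, r ^ dd j M ≤ 2 * (1 - r)⁻¹ := by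
  have hg : ∀ k, ∑ i ∈ Finset.range k, r ^ i ≤ (1 - r)⁻¹ := by
    intro k
    rw [← tsum_geometric_of_lt_one h0 h1]
    exact (summable_geometric_of_lt_one h0 h1).sum_le_tsum _ (fun i _ => by positivity)
  calc ∑ j ∈ Finset.range n, r ^ dd j M ≤ ∑ j ∈ Finset.range (M + 1 + n), r ^ dd j M := by
        apply Finset.sum_le_sum_of_subset_of_nonneg
        · apply Finset.range_mono; omega
        · intros; positivity
    _ = ∑ j ∈ Finset.range (M + 1), r ^ dd j M + ∑ i ∈ Finset.range n, r ^ dd (M + 1 + i) M := by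
        rw [Finset.sum_range_add]
    _ ≤ ∑ j ∈ Finset.range (M + 1), r ^ j + ∑ i ∈ Finset.range n, r ^ i := by
        gcongr ?_ + ?_
        · rw [← Finset.sum_range_reflect (fun j => r ^ j)]
          apply le_of_eq
          refine Finset.sum_congr rfl fun j hj => ?_
          congr 1
          have := Finset.mem_range.1 hj
          unfold dd; omega
        · refine Finset.sum_le_sum fun i _ => ?_
          apply pow_le_pow_of_le_one h0 h1.le
          unfold dd; omega
    _ ≤ _ := by linarith [hg (M + 1), hg n]

lemma num_level (m : ℕ) (hm : 2 ≤ m) (M j : ℕ) {A : ℝ} (hA : 0 ≤ A) :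
    ∃ t : ℝ, 0 < t ∧
      Real.exp (t * ((A * (4 ^ j / 4 ^ (j * m))) /
        ((1 / 2 : ℝ) ^ (m * M) * (3 / 4) ^ dd j M) ^ 2)) *
        (1 + 2 / (Real.exp t - 1)) ^ (2 ^ j * 2 ^ j * (m * m)) ≤
      Real.exp (4 ^ M * (3 * A + 4 * m ^ 2 * (m + 1)) * (8 / 9) ^ dd j M) := by
  rcases le_or_gt j M with h | h
  · obtain ⟨d, rfl⟩ := Nat.exists_eq_add_of_le h
    rw [show dd j (j + d) = d by unfold dd; omega]
    exact num_dense m j d hA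
  · obtain ⟨d, rfl⟩ := Nat.exists_eq_add_of_lt h
    rw [show dd (M + d + 1) M = d + 1 by unfold dd; omega]
    exact num_sparse m hm M (d + 1) (by omega) hA

lemma comp_net (m : ℕ) (hm : 2 ≤ m) (b : ℝ) :
    ∃ E K : ℝ, 1 ≤ E ∧ 1 ≤ K ∧ ∀ M : ℕ, ∃ T : Finset (ℝ → ℝ → ℝ),
      (T.card : ℝ) ≤ Real.exp (K * 4 ^ M) ∧
      ∀ g, CD m g → Omega2M m g ≤ 1 →
        (∀ u ∈ Set.Icc (0:ℝ) 1, ∀ v ∈ Set.Icc (0:ℝ) 1, |g u v| ≤ b) →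
        ∃ f ∈ T, ∀ u ∈ Set.Icc (0:ℝ) 1, ∀ v ∈ Set.Icc (0:ℝ) 1,
          |g u v - f u v| ≤ E * (1 / 2) ^ (m * M) := by
  classical
  obtain ⟨Λ, hΛ, hL⟩ := ell_bound m
  obtain ⟨C, hC1, hC⟩ := itp_local m hm
  set A : ℝ := m ^ 2 * C ^ 2 * 4 ^ m + m ^ 2 * b ^ 2 with hAdef
  have hA : 0 ≤ A := by positivity
  set K0 : ℝ := 3 * A + 4 * m ^ 2 * (m + 1) with hK0
  have hK0pos : 0 ≤ K0 := by positivity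
  refine ⟨m ^ 2 * Λ ^ 2 * 8 + C, K0 * 18 + 1, ?_, by linarith, fun M => ?_⟩
  · have : 0 ≤ (m:ℝ) ^ 2 * Λ ^ 2 * 8 := by positivity
    linarith
  have key : ∀ j : ℕ, ∃ T : Finset (ℝ → ℝ → ℝ),
      (T.card : ℝ) ≤ Real.exp (4 ^ M * K0 * (8 / 9) ^ dd j M) ∧
      ∀ c : ℕ → ℕ → Fin m → Fin m → ℝ,
        (∑ k ∈ Finset.range (2 ^ j), ∑ l ∈ Finset.range (2 ^ j), ∑ a, ∑ b, (c k l a b) ^ 2 ≤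
          A * (4 ^ j / 4 ^ (j * m))) →
        ∃ f ∈ T, ∀ u ∈ Set.Icc (0:ℝ) 1, ∀ v ∈ Set.Icc (0:ℝ) 1,
          |lev m (2 ^ j) c u v - f u v| ≤
            (m ^ 2 * Λ ^ 2) * ((1 / 2 : ℝ) ^ (m * M) * (3 / 4) ^ dd j M) := by
    intro j
    obtain ⟨t, ht, htb⟩ := num_level m hm M j hA
    obtain ⟨T, hT1, hT2⟩ := lev_cover m hΛ hL (N := 2 ^ j) (by positivity)
      (ε := (1 / 2 : ℝ) ^ (m * M) * (3 / 4) ^ dd j M) (E := A * (4 ^ j / 4 ^ (j * m))) (t := t)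
      (by positivity) ht
    exact ⟨T, hT1.trans htb, hT2⟩
  choose Tj hTc hTn using key
  set n := m * M + 1 with hn
  refine ⟨(Fintype.piFinset (fun j : Fin n => Tj j)).image (fun F u v => ∑ j, F j u v), ?_, ?_⟩
  · refine (Nat.cast_le.2 Finset.card_image_le).trans ?_
    rw [Fintype.card_piFinset]
    push_cast
    calc ∏ j : Fin n, ((Tj j).card : ℝ) ≤ ∏ j : Fin n, Real.exp (4 ^ M * K0 * (8 / 9) ^ dd j M) :=
          Finset.prod_le_prod (fun _ _ => by positivity) fun j _ => hTc j
      _ = Real.exp (4 ^ M * K0 * ∑ j ∈ Finset.range n, (8 / 9) ^ dd j M) := by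
          rw [← Real.exp_sum, Finset.mul_sum,
            Fin.sum_univ_eq_sum_range (fun j => 4 ^ M * K0 * (8 / 9 : ℝ) ^ dd j M)]
      _ ≤ Real.exp (4 ^ M * K0 * (2 * (1 - 8 / 9)⁻¹)) := by
          gcongr
          exact geo _ (by norm_num) (by norm_num) M n
      _ ≤ _ := by
          apply Real.exp_le_exp.2
          norm_num
          nlinarith [show (0:ℝ) < 4 ^ M by positivity]
  · intro g hg hO hgb
    choose f hf1 hf2 using fun j : ℕ => hTn j _ (energy m hm hC1 hC hg hO hgb j)
    refine ⟨_, Finset.mem_image_of_mem _ (Fintype.mem_piFinset.2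
      (fun j : Fin n => hf1 j)), fun u hu v hv => ?_⟩
    have h1 := final_err m hm hC1 hC hg hO (N := 2 ^ (m * M)) (by positivity) hu hv
    have h2 : |lev m (2 ^ (m * M)) (c0 m (2 ^ (m * M)) g) u v - ∑ j : Fin n, f j u v| ≤
        m ^ 2 * Λ ^ 2 * 8 * (1 / 2) ^ (m * M) := by
      rw [tele, Fin.sum_univ_eq_sum_range (fun j => f j u v), ← Finset.sum_sub_distrib]
      calc _ ≤ ∑ j ∈ Finset.range n,
            (m ^ 2 * Λ ^ 2) * ((1 / 2 : ℝ) ^ (m * M) * (3 / 4) ^ dd j M) :=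
            (Finset.abs_sum_le_sum_abs _ _).trans
              (Finset.sum_le_sum fun j _ => hf2 j u hu v hv)
        _ = (m ^ 2 * Λ ^ 2) * (1 / 2 : ℝ) ^ (m * M) * ∑ j ∈ Finset.range n, (3 / 4) ^ dd j M := by
            rw [Finset.mul_sum]; simp only [mul_assoc]
        _ ≤ (m ^ 2 * Λ ^ 2) * (1 / 2 : ℝ) ^ (m * M) * (2 * (1 - 3 / 4)⁻¹) := by
            gcongr
            exact geo _ (by norm_num) (by norm_num) M n
        _ = _ := by norm_num; ring
    have e : C * (1 / ((2 ^ (m * M) : ℕ) : ℝ)) = C * (1 / 2) ^ (m * M) := by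
      push_cast; rw [one_div_pow]
    rw [e] at h1
    calc _ ≤ _ := abs_sub_le _ (lev m (2 ^ (m * M)) (c0 m (2 ^ (m * M)) g) u v) _
      _ ≤ _ := by linarith

lemma comp_net' (m : ℕ) (hm : 2 ≤ m) (b : ℝ) :
    ∃ C : ℝ, 1 ≤ C ∧ ∀ δ : ℝ, 0 < δ → δ < 1 → ∃ T : Finset (ℝ → ℝ → ℝ),
      (T.card : ℝ) ≤ Real.exp (C * δ ^ (-(2 : ℝ) / m)) ∧
      ∀ g, CD m g → Omega2M m g ≤ 1 →
        (∀ u ∈ Set.Icc (0:ℝ) 1, ∀ v ∈ Set.Icc (0:ℝ) 1, |g u v| ≤ b) →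
        ∃ f ∈ T, ∀ u ∈ Set.Icc (0:ℝ) 1, ∀ v ∈ Set.Icc (0:ℝ) 1,
          |g u v - f u v| ≤ δ := by
  obtain ⟨E, K, hE, hK, h⟩ := comp_net m hm b
  have hm0 : (0:ℝ) < m := by exact_mod_cast (by omega : 0 < m)
  refine ⟨K * 4 * E ^ ((2:ℝ) / m), ?_, fun δ hδ hδ1 => ?_⟩
  · have : 1 ≤ E ^ ((2:ℝ) / m) := Real.one_le_rpow hE (by positivity)
    nlinarith
  set x : ℝ := (E / δ) ^ ((1:ℝ) / m) with hx
  have hEδ : 1 ≤ E / δ := by rw [le_div_iff₀ hδ]; linarith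
  have hx1 : 1 ≤ x := Real.one_le_rpow hEδ (by positivity)
  obtain ⟨k, hk1, hk2⟩ := exists_nat_pow_near hx1 (show (1:ℝ) < 2 by norm_num)
  obtain ⟨T, hT1, hT2⟩ := h (k + 1)
  refine ⟨T, hT1.trans (Real.exp_le_exp.2 ?_), fun g h1 h2 h3 => ?_⟩
  · have h4 : (4:ℝ) ^ (k + 1) ≤ 4 * x ^ 2 := by
      rw [pow_succ, mul_comm, show (4:ℝ) ^ k = (2 ^ k) ^ 2 by
        rw [← pow_mul, mul_comm, pow_mul]; norm_num]
      gcongr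
    have h5 : x ^ 2 = E ^ ((2:ℝ) / m) * δ ^ (-(2 : ℝ) / m) := by
      rw [hx, ← Real.rpow_natCast, ← Real.rpow_mul (by positivity),
        show (1:ℝ) / m * ((2:ℕ):ℝ) = 2 / m by push_cast; ring,
        Real.div_rpow (by positivity) hδ.le, neg_div, Real.rpow_neg hδ.le, ← div_eq_mul_inv]
    calc K * 4 ^ (k + 1) ≤ K * (4 * x ^ 2) := by gcongr
      _ = _ := by rw [h5]; ring
  · obtain ⟨f, hf, hf2⟩ := hT2 g h1 h2 h3
    refine ⟨f, hf, fun u hu v hv => (hf2 u hu v hv).trans ?_⟩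
    have h4 : E / δ ≤ (2 ^ (k + 1)) ^ m := by
      have : x ^ m = E / δ := by
        rw [hx, ← Real.rpow_natCast, ← Real.rpow_mul (by positivity)]
        rw [one_div_mul_cancel hm0.ne', Real.rpow_one]
      rw [← this]
      exact pow_le_pow_left₀ (by positivity) hk2.le m
    rw [div_le_iff₀ hδ] at h4
    rw [one_div_pow, mul_one_div, div_le_iff₀ (by positivity), mul_comm m, pow_mul]
    linarith
end Census12

namespace Census12
open Census MeasureTheory

lemma uni_CD {m : ℕ} {h : ℝ → ℝ} (hh : ContDiff ℝ (m : ℕ∞) h) : CD m (fun u _ => h u) := by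
  have : ContDiff ℝ (m : ℕ∞) (fun q : ℝ × ℝ => h q.1) := hh.comp contDiff_fst
  exact_mod_cast this

lemma uni_Om (m : ℕ) (h : ℝ → ℝ) : Omega2M m (fun u _ => h u) = Omega1M m h := by
  unfold Omega2M Omega1M
  rw [Finset.sum_eq_single m]
  · have e : ∀ q : ℝ × ℝ, (pd m (m - m) (fun u _ => h u) q.1 q.2) ^ 2 =
        (iteratedDeriv m h q.1) ^ 2 * (fun _ : ℝ => (1:ℝ)) q.2 := by
      intro q; simp [pd]
    simp only [e]
    rw [Measure.volume_eq_prod, setIntegral_prod_mul (fun x => (iteratedDeriv m h x) ^ 2)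
      (fun _ => (1:ℝ))]
    simp only [integral_const, MeasurableSet.univ]
    rw [intervalIntegral.integral_of_le zero_le_one, integral_Icc_eq_integral_Ioc]
    simp
  · intro a ha ham
    have hlt : m - a ≠ 0 := by
      have := Finset.mem_range.1 ha
      omega
    have e : ∀ q : ℝ × ℝ, (pd a (m - a) (fun u _ => h u) q.1 q.2) ^ 2 = 0 := by
      intro q; simp [pd, iteratedDeriv_const, hlt]
    simp [e]
  · intro h; simp at h

lemma combine (m : ℕ) (hm : 2 ≤ m) (b : ℝ) (hb : 1 ≤ b) : ∃ C : ℝ, 0 < C ∧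
    ∀ (p : ℕ) (J : Finset (Fin p × Fin p)) (hJ : J.Nonempty) (δ : ℝ), 0 < δ → δ < 1 →
      ∃ T : Finset ((Fin p → ℝ) → ℝ), (T.card : ℝ) ≤ Real.exp (C * J.card * δ ^ (-(2 : ℝ) / m)) ∧
        ∀ f ∈ SJ m b p J, ∃ t ∈ T, ∀ x : Fin p → ℝ, (∀ j, x j ∈ Set.Icc (0:ℝ) 1) →
          |f x - t x| ≤ δ := by
  classical
  obtain ⟨C, hC1, hC⟩ := comp_net' m hm b
  have hm0 : (0:ℝ) < m := by exact_mod_cast (by omega : 0 < m)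
  set D : ℝ := 1 + (5 * b) ^ ((2:ℝ) / m) / (2 / m) + C * (1 / 2) ^ (-(2 : ℝ) / m) with hD
  refine ⟨D, by positivity, fun p J hJ δ hδ hδ1 => ?_⟩
  have hb0 : 0 < b := by linarith
  have hJ0 : (0:ℝ) < J.card := by exact_mod_cast hJ.card_pos
  obtain ⟨T, hT1, hT2⟩ := hC (δ / 2) (by positivity) (by linarith)
  set ε : ℝ := δ / (2 * b * J.card) with hε
  have hεpos : 0 < ε := by positivity
  obtain ⟨Z, hZ1, hZ2⟩ := count (ι := J) (1 / ε) (δ / (2 * b)) (by positivity)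
  refine ⟨(Z ×ˢ Fintype.piFinset (fun _ : J => T)).image (fun w x =>
    ∑ q : J, ε * (w.1 q : ℝ) * w.2 q (x q.1.1) (x q.1.2)), ?_, ?_⟩
  · refine (Nat.cast_le.2 Finset.card_image_le).trans ?_
    rw [Finset.card_product, Fintype.card_piFinset]
    push_cast
    simp only [Finset.prod_const, Finset.card_univ, Fintype.card_coe] at hZ2 ⊢
    have hx : δ ^ (-(2 : ℝ) / m) = 1 / δ ^ ((2:ℝ) / m) := by
      rw [neg_div, Real.rpow_neg hδ.le, one_div]
    have hx1 : 1 ≤ δ ^ (-(2 : ℝ) / m) := by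
      rw [neg_div]
      exact Real.one_le_rpow_of_pos_of_le_one_of_nonpos hδ hδ1.le (by
        have : (0:ℝ) ≤ 2 / m := by positivity
        linarith)
    have h1 : δ / (2 * b) * (1 / ε) = J.card := by
      rw [hε]; field_simp
    have h2 : 1 + 2 / (Real.exp (δ / (2 * b)) - 1) ≤
        Real.exp ((5 * b) ^ ((2:ℝ) / m) / (2 / m) * δ ^ (-(2 : ℝ) / m)) := by
      have h3 : δ / (2 * b) ≤ Real.exp (δ / (2 * b)) - 1 := by
        linarith [Real.add_one_le_exp (δ / (2 * b))]
      have h4 : 1 + 2 / (Real.exp (δ / (2 * b)) - 1) ≤ 5 * b / δ := by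
        calc _ ≤ 1 + 2 / (δ / (2 * b)) := by gcongr
          _ = (δ + 4 * b) / δ := by field_simp; ring
          _ ≤ 5 * b / δ := by gcongr; linarith
      have h5 : Real.log (5 * b / δ) ≤ (5 * b / δ) ^ ((2:ℝ) / m) / (2 / m) :=
        Real.log_le_rpow_div (by positivity) (by positivity)
      rw [Real.log_le_iff_le_exp (by positivity)] at h5
      refine h4.trans (h5.trans (Real.exp_le_exp.2 (le_of_eq ?_)))
      rw [Real.div_rpow (by positivity) hδ.le, hx]; ring
    have h0 : 0 ≤ 1 + 2 / (Real.exp (δ / (2 * b)) - 1) := by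
      have : 0 < Real.exp (δ / (2 * b)) - 1 := by
        linarith [Real.add_one_lt_exp (show δ / (2 * b) ≠ 0 by positivity),
          show 0 < δ / (2 * b) by positivity]
      positivity
    rw [h1] at hZ2
    have hx2 : (δ / 2) ^ (-(2 : ℝ) / m) = (1 / 2) ^ (-(2 : ℝ) / m) * δ ^ (-(2 : ℝ) / m) := by
      rw [← Real.mul_rpow (by norm_num) hδ.le]; ring_nf
    rw [hx2] at hT1
    set X := δ ^ (-(2 : ℝ) / m) with hX
    calc (Z.card : ℝ) * (T.card : ℝ) ^ J.card ≤
        (Real.exp J.card * (Real.exp ((5 * b) ^ ((2:ℝ) / m) / (2 / m) * X)) ^ J.card) *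
        (Real.exp (C * ((1 / 2) ^ (-(2 : ℝ) / m) * X))) ^ J.card := by
          gcongr
          refine hZ2.trans ?_
          gcongr
      _ = Real.exp (J.card * (1 + (5 * b) ^ ((2:ℝ) / m) / (2 / m) * X +
            C * ((1 / 2) ^ (-(2 : ℝ) / m) * X))) := by
          rw [← Real.exp_nat_mul, ← Real.exp_nat_mul, ← Real.exp_add, ← Real.exp_add]
          ring_nf
      _ ≤ _ := by
          apply Real.exp_le_exp.2
          rw [hD, mul_comm _ (J.card : ℝ), mul_assoc]
          gcongr
          nlinarith
  · rintro f ⟨lam, gd, go, hlam, hgd, hgo, rfl⟩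
    set G : J → ℝ → ℝ → ℝ := fun q =>
      if q.1.1 = q.1.2 then (fun u _ => gd q.1.1 u) else go q.1.1 q.1.2 with hG
    have hGb : ∀ q : J, ∀ u ∈ Set.Icc (0:ℝ) 1, ∀ v ∈ Set.Icc (0:ℝ) 1, |G q u v| ≤ b := by
      intro q u hu v hv
      by_cases h : q.1.1 = q.1.2
      · simp only [hG, h, if_true]; exact (hgd _).2.2 u hu
      · simp only [hG, h, if_false]; exact (hgo _ _).2.2 u hu v hv
    have hGn : ∀ q : J, ∃ t ∈ T, ∀ u ∈ Set.Icc (0:ℝ) 1, ∀ v ∈ Set.Icc (0:ℝ) 1,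
        |G q u v - t u v| ≤ δ / 2 := by
      intro q
      refine hT2 (G q) ?_ ?_ (hGb q)
      · by_cases h : q.1.1 = q.1.2
        · simp only [hG, h, if_true]; exact uni_CD (hgd _).1
        · simp only [hG, h, if_false]; exact_mod_cast (hgo _ _).1
      · by_cases h : q.1.1 = q.1.2
        · simp only [hG, h, if_true]
          rw [uni_Om]
          have := (hgd q.1.2).2.1
          rwa [Real.sqrt_le_one] at this
        · simp only [hG, h, if_false]
          have := (hgo q.1.1 q.1.2).2.1
          rwa [Real.sqrt_le_one] at this
    choose t ht1 ht2 using hGn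
    choose z hz1 hz2 using fun q : J => quant ε (lam q.1) hεpos
    have hl : ∑ q : J, |lam q.1| ≤ 1 := by
      rw [Finset.sum_coe_sort J (fun q => |lam q|)]; exact hlam
    have hzl : ∑ q : J, ε * |(z q : ℝ)| ≤ 1 := (Finset.sum_le_sum fun q _ => hz2 q).trans hl
    have hzZ : z ∈ Z := by
      apply hZ1
      rw [le_div_iff₀ hεpos, mul_comm, Finset.mul_sum]
      exact_mod_cast hzl
    refine ⟨_, Finset.mem_image_of_mem _ (Finset.mem_product.2
      (⟨hzZ, Fintype.mem_piFinset.2 ht1⟩ : (z, t).1 ∈ _ ∧ (z, t).2 ∈ _)), fun x hx => ?_⟩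
    have e : ∑ q ∈ J, lam q * (if q.1 = q.2 then gd q.1 (x q.1) else go q.1 q.2 (x q.1) (x q.2)) =
        ∑ q : J, lam q.1 * G q (x q.1.1) (x q.1.2) := by
      rw [← Finset.sum_coe_sort J]
      refine Finset.sum_congr rfl fun q _ => ?_
      simp only [hG]
      split_ifs <;> rfl
    simp only [e]
    rw [← Finset.sum_sub_distrib]
    calc _ ≤ ∑ q : J, |lam q.1 * G q (x q.1.1) (x q.1.2) -
          ε * (z q : ℝ) * t q (x q.1.1) (x q.1.2)| := Finset.abs_sum_le_sum_abs _ _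
      _ ≤ ∑ q : J, (ε * b + ε * |(z q : ℝ)| * (δ / 2)) := by
          refine Finset.sum_le_sum fun q _ => ?_
          have h1 := hGb q _ (hx q.1.1) _ (hx q.1.2)
          have h2 := ht2 q _ (hx q.1.1) _ (hx q.1.2)
          have h3 := hz1 q
          have e2 : lam q.1 * G q (x q.1.1) (x q.1.2) - ε * (z q : ℝ) * t q (x q.1.1) (x q.1.2) =
            (lam q.1 - ε * z q) * G q (x q.1.1) (x q.1.2) +
            (ε * z q) * (G q (x q.1.1) (x q.1.2) - t q (x q.1.1) (x q.1.2)) := by ring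
          rw [e2]
          refine (abs_add_le _ _).trans ?_
          rw [abs_mul, abs_mul, abs_mul ε, abs_of_pos hεpos]
          gcongr
      _ = J.card * (ε * b) + (∑ q : J, ε * |(z q : ℝ)|) * (δ / 2) := by
          rw [Finset.sum_add_distrib, Finset.sum_mul]
          simp
      _ ≤ δ / 2 + 1 * (δ / 2) := by
          gcongr
          rw [hε]; apply le_of_eq; field_simp
      _ = δ := by ring
end Census12

open Census in
/-- sup-norm entropy of sparse absolutely convex combinations of
smooth bivariate components.  There is `C` depending only on `m` and `b` such that
`H(δ, S_J, ‖·‖_∞) ≤ C |J| δ^{-2/m}` for all `δ ∈ (0,1)`. -/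
theorem statement12 (m : ℕ) (hm : 2 ≤ m) (b : ℝ) (hb : 1 ≤ b) :
    ∃ C : ℝ, 0 < C ∧
      ∀ (p : ℕ), 1 ≤ p →
      ∀ (J : Finset (Fin p × Fin p)), (∀ q ∈ J, q.1 ≤ q.2) →
      ∀ (δ : ℝ), 0 < δ → δ < 1 →
        entE (dBox p) (SJ m b p J) δ ≤
          ENNReal.ofReal (C * (J.card : ℝ) * δ ^ (-(2 : ℝ) / m)) := by
  obtain ⟨C, hC0, hC⟩ := Census12.combine m hm b hb
  refine ⟨C, hC0, fun p _ J _ δ hδ hδ1 => ?_⟩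
  have key : ∃ T : Finset ((Fin p → ℝ) → ℝ),
      (T.card : ℝ) ≤ Real.exp (C * J.card * δ ^ (-(2 : ℝ) / m)) ∧
        ∀ f ∈ SJ m b p J, ∃ t ∈ T, ∀ x : Fin p → ℝ, (∀ j, x j ∈ Set.Icc (0:ℝ) 1) →
          |f x - t x| ≤ δ := by
    rcases J.eq_empty_or_nonempty with rfl | hJ
    · refine ⟨{fun _ => 0}, by simp, ?_⟩
      rintro f ⟨lam, gd, go, -, -, -, rfl⟩
      refine ⟨_, Finset.mem_singleton_self _, fun x _ => ?_⟩
      simp [hδ.le]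
    · exact hC p J hJ δ hδ hδ1
  obtain ⟨T, hT1, hT2⟩ := key
  unfold entE
  have hcov : ∀ a ∈ SJ m b p J, ∃ t ∈ T, dBox p a t ≤ ENNReal.ofReal δ := by
    intro a ha
    obtain ⟨t, ht, h⟩ := hT2 a ha
    exact ⟨t, ht, iSup₂_le fun x hx => ENNReal.ofReal_le_ofReal (h x hx)⟩
  refine (iInf_le _ ⟨T, hcov⟩).trans (ENNReal.ofReal_le_ofReal ?_)
  rcases Nat.eq_zero_or_pos T.card with h0 | h0
  · simp only [h0, Nat.cast_zero, Real.log_zero]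
    positivity
  · rw [Real.log_le_iff_le_exp (by exact_mod_cast h0)]
    exact hT1
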